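/- arXiv:2605.27197 — 2 statements merged into one kernel-verified Lean document; each statement's English description precedes it below -/
import Mathlib

section
/- For any μ₊, μ₋ ∈ Λ, the shifted twisted quantum affine algebra U_q^{μ₊,μ₋}(ĝ^σ) depends, up to isomorphism, only on the sum μ = μ₊ + μ₋; more precisely, there is an algebra isomorphism U_q^{μ₊,μ₋}(ĝ^σ) ≅ U_q^{0,μ₊+μ₋}(ĝ^σ). -/
/-!
The isomorphism translates the modes of the currents. If the modes of `x^±_i` are translated by
`ν^±_i`, the relation for `[x^+_{i,r}, x^-_{i,r'}]` forces those of `φ^±_i` to be translated by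
`ν^+_i + ν^-_i`, which lowers `α_i(μ₊)` and raises `α_i(μ₋)` by this amount. All other relations are
homogeneous in the modes, the support conditions on `x^±_i` and the condition `N_i ∣ r'` surviving
because `N_i ∣ ν^±_i`. The translation by `-ν` is the inverse. Any `ν^±` with `ν^+ + ν^- = μ₊` and
`N_i ∣ ν^±_i` brings `μ₊` to `0`, for instance `ν^+ = μ₊` and `ν^- = 0`.
-/

noncomputable section

open scoped TensorProduct

/-- The combinatorial and numerical data underlying a twisted quantum affine algebra:
a simply-laced Dynkin diagram with an automorphism `σ` of order `M ∈ {2,3}`, a set `I0`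
of representatives of the `σ`-orbits, the Cartan entries `C_{i,σ^s(j)}`, the Cartan matrix
of the finite type Lie algebra `𝔤^σ`, and the quantum parameters. -/
structure TQAData where
  /-- representatives of the `σ`-orbits of Dynkin nodes -/
  I0 : Type
  finI0 : Fintype I0
  deqI0 : DecidableEq I0
  /-- order of the diagram automorphism `σ` -/
  M : ℕ
  hM : M = 2 ∨ M = 3
  /-- whether a node is fixed by `σ` -/
  fixed : I0 → Bool
  /-- `Cs i j s` is the Cartan entry `C_{i,σ^{s+1}(j)}` of `𝔤`, for `0 ≤ s < M` -/
  Cs : I0 → I0 → ℕ → ℤ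
  /-- Cartan matrix `C^σ` of the finite type Lie algebra `𝔤^σ` -/
  Cfin : I0 → I0 → ℤ
  /-- the quantum parameter, not a root of unity -/
  q : ℂ
  hq0 : q ≠ 0
  hqroot : ∀ n : ℕ, 0 < n → q ^ n ≠ 1
  /-- a chosen square root of `q` -/
  sq : ℂ
  hsq : sq ^ 2 = q
  /-- the numbers `q_i = q^{d_i}` -/
  qi : I0 → ℂ
  hqi0 : ∀ i, qi i ≠ 0
  hqi1 : ∀ i, qi i * qi i ≠ 1

attribute [instance] TQAData.finI0 TQAData.deqI0

namespace TQAData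

variable (D : TQAData)

lemma Mpos : 0 < D.M := by rcases D.hM with h | h <;> omega

/-- `ζ = exp(2πi/M)`. -/
def ζ : ℂ := Complex.exp (2 * Real.pi * Complex.I / (D.M : ℂ))

/-- `N_i = M` if `σ(i) = i`, and `1` otherwise. -/
def N (i : D.I0) : ℕ := if D.fixed i then D.M else 1

/-- the Cartan entry `C_{i,j}` of `𝔤` (note `σ^M = id`). -/
def Cij (i j : D.I0) : ℤ := D.Cs i j (D.M - 1)

/-- the Cartan entry `C_{i,σ(i)}` of `𝔤`. -/
def Ciσ (i : D.I0) : ℤ := D.Cs i i 0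

/-- `q_i - q_i⁻¹`. -/
def qd (i : D.I0) : ℂ := D.qi i - (D.qi i)⁻¹

/-- The coefficient `(1/m) ∑_{s=1}^{M} [m C_{i,σ^s(j)} / d_i]_{q_i} ζ^{ms}` appearing
in the relation `[h_{i,m}, x^±_{j,r}] = ± (…) x^±_{j,m+r}`, where
`[m C/d_i]_{q_i} = (q^{mC} - q^{-mC})/(q_i - q_i⁻¹)`. -/
def hxCoef (i j : D.I0) (m : ℤ) : ℂ :=
  (m : ℂ)⁻¹ * ∑ s ∈ Finset.range D.M,
    ((D.q ^ (m * D.Cs i j s) - D.q ^ (-(m * D.Cs i j s))) / D.qd i) *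
      D.ζ ^ (m * ((s : ℤ) + 1))

/-- The coefficient `q^{2Md_{i,j}} + q^{-2Md_{i,j}}` in the Serre relations. -/
def serreC (i j : D.I0) : ℂ :=
  (if D.Ciσ i = 2 then D.q ^ D.M
    else if D.Ciσ i = 0 ∧ D.fixed j then D.q ^ D.M
    else if D.Ciσ i = 0 then D.q
    else D.sq) +
  (if D.Ciσ i = 2 then D.q ^ D.M
    else if D.Ciσ i = 0 ∧ D.fixed j then D.q ^ D.M
    else if D.Ciσ i = 0 then D.q
    else D.sq)⁻¹

/-- `u₁`-exponents of the polynomials `P^±_{i,j}(u₁,u₂)` in the Serre relations. -/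
def pa (i j : D.I0) (t : ℕ) : ℕ :=
  if D.Ciσ i = 0 ∧ D.fixed j then D.M - 1 - t
  else if D.Ciσ i = -1 then (if t = 0 then 1 else 0) else 0

/-- `u₂`-exponents of the polynomials `P^±_{i,j}(u₁,u₂)` in the Serre relations. -/
def pb (i j : D.I0) (t : ℕ) : ℕ :=
  if D.Ciσ i = 0 ∧ D.fixed j then t
  else if D.Ciσ i = -1 then (if t = 0 then 0 else 1) else 0

/-- coefficients of the polynomials `P^±_{i,j}(u₁,u₂)` in the Serre relations
(`e = ±1` is the sign). -/
def pcoef (e : ℤ) (i j : D.I0) (t : ℕ) : ℂ :=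
  if D.Ciσ i = 0 ∧ D.fixed j then
    (if t ≤ D.M - 1 then D.q ^ (e * 2 * ((D.M - 1 - t : ℕ) : ℤ)) else 0)
  else if D.Ciσ i = -1 then (if t = 0 then D.q ^ e else if t = 1 then 1 else 0)
  else (if t = 0 then 1 else 0)

end TQAData

/-- Drinfeld generators: `x^+_{i,r}`, `x^-_{i,r}`, `φ^+_{i,r}`, `φ^-_{i,r}`,
the inverses of the leading coefficients of the Cartan currents, and `h_{i,m}`. -/
inductive TQAGen (D : TQAData) : Type
  | xp (i : D.I0) (r : ℤ)
  | xm (i : D.I0) (r : ℤ)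
  | pp (i : D.I0) (r : ℤ)
  | pm (i : D.I0) (r : ℤ)
  | ppInv (i : D.I0)
  | pmInv (i : D.I0)
  | hh (i : D.I0) (m : ℤ)

namespace TQA

/-- the free algebra on the Drinfeld generators -/
abbrev FA (D : TQAData) := FreeAlgebra ℂ (TQAGen D)

variable (D : TQAData)

def gXp (i : D.I0) (r : ℤ) : FA D := FreeAlgebra.ι ℂ (TQAGen.xp i r)
def gXm (i : D.I0) (r : ℤ) : FA D := FreeAlgebra.ι ℂ (TQAGen.xm i r)
def gPp (i : D.I0) (r : ℤ) : FA D := FreeAlgebra.ι ℂ (TQAGen.pp i r)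
def gPm (i : D.I0) (r : ℤ) : FA D := FreeAlgebra.ι ℂ (TQAGen.pm i r)
def gPpInv (i : D.I0) : FA D := FreeAlgebra.ι ℂ (TQAGen.ppInv i)
def gPmInv (i : D.I0) : FA D := FreeAlgebra.ι ℂ (TQAGen.pmInv i)
def gH (i : D.I0) (m : ℤ) : FA D := FreeAlgebra.ι ℂ (TQAGen.hh i m)

/-- the current `x^ε` for a sign `ε` (`true` = `+`). -/
def gX : Bool → D.I0 → ℤ → FA D
  | true => gXp D
  | false => gXm D

/-- sign attached to a Boolean -/
def sg (ε : Bool) : ℤ := if ε then 1 else -1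

/-- Cartan generators -/
def IsCartanGen : TQAGen D → Prop
  | TQAGen.pp _ _ => True
  | TQAGen.pm _ _ => True
  | TQAGen.ppInv _ => True
  | TQAGen.pmInv _ => True
  | TQAGen.hh _ _ => True
  | _ => False

/-- The inner term of the Serre relation
`x_j x_i x_i - (q^{2Md_{ij}}+q^{-2Md_{ij}}) x_i x_j x_i + x_i x_i x_j` in modes. -/
def serreS (ε : Bool) (i j : D.I0) (k n1 n2 : ℤ) : FA D :=
  gX D ε j k * gX D ε i n1 * gX D ε i n2
    - D.serreC i j • (gX D ε i n1 * gX D ε j k * gX D ε i n2)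
    + gX D ε i n1 * gX D ε i n2 * gX D ε j k

variable (μp μm : D.I0 → ℤ)

/-- The defining relations of the shifted twisted quantum affine algebra
`𝒰_q^{μ₊,μ₋}(ĝ^σ)`, written in terms of the modes of the Drinfeld currents.
The Cartan currents are
`φ_i^±(z) = z^{∓α_i(μ_±)} φ^±_{i,∓α_i(μ_±)} exp(±(q_i−q_i⁻¹) ∑_{m≥1} h_{i,±m} z^{±m})`,
with invertible leading coefficients; this is encoded by the support relations,
the invertibility relations, and the exponential recursions `pp_exp`/`pm_exp`. -/
inductive Rel : FA D → FA D → Prop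
  | x_supp (ε : Bool) (i : D.I0) (r : ℤ) (hr : ¬ ((D.N i : ℤ) ∣ r)) :
      Rel (gX D ε i r) 0
  | h_supp (i : D.I0) (m : ℤ) (hm : ¬ ((D.N i : ℤ) ∣ m) ∨ m = 0) :
      Rel (gH D i m) 0
  | pp_supp (i : D.I0) (r : ℤ) (hr : r < -μp i) : Rel (gPp D i r) 0
  | pm_supp (i : D.I0) (r : ℤ) (hr : μm i < r) : Rel (gPm D i r) 0
  | cartan_comm (a b : TQAGen D) (ha : IsCartanGen D a) (hb : IsCartanGen D b) :
      Rel (FreeAlgebra.ι ℂ a * FreeAlgebra.ι ℂ b) (FreeAlgebra.ι ℂ b * FreeAlgebra.ι ℂ a)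
  | pp_inv_l (i : D.I0) : Rel (gPpInv D i * gPp D i (-μp i)) 1
  | pp_inv_r (i : D.I0) : Rel (gPp D i (-μp i) * gPpInv D i) 1
  | pm_inv_l (i : D.I0) : Rel (gPmInv D i * gPm D i (μm i)) 1
  | pm_inv_r (i : D.I0) : Rel (gPm D i (μm i) * gPmInv D i) 1
  | pp_exp (i : D.I0) (m : ℕ) :
      Rel (((m : ℂ) + 1) • gPp D i (-μp i + (m + 1)))
        (D.qd i •
          ∑ k ∈ Finset.range (m + 1),
            ((k : ℂ) + 1) •
              (gH D i ((k : ℤ) + 1) * gPp D i (-μp i + (m + 1) - ((k : ℤ) + 1))))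
  | pm_exp (i : D.I0) (m : ℕ) :
      Rel ((-((m : ℂ) + 1)) • gPm D i (μm i - (m + 1)))
        (D.qd i •
          ∑ k ∈ Finset.range (m + 1),
            ((k : ℂ) + 1) •
              (gH D i (-((k : ℤ) + 1)) * gPm D i (μm i - (m + 1) + ((k : ℤ) + 1))))
  | lead_conj_p (ε : Bool) (i j : D.I0) (r : ℤ) :
      Rel (gPp D i (-μp i) * gX D ε j r)
        ((D.q ^ (sg ε * ∑ s ∈ Finset.range D.M, D.Cs i j s)) •
          (gX D ε j r * gPp D i (-μp i)))
  | lead_conj_m (ε : Bool) (i j : D.I0) (r : ℤ) :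
      Rel (gPm D i (μm i) * gX D ε j r)
        ((D.q ^ (-(sg ε) * ∑ s ∈ Finset.range D.M, D.Cs i j s)) •
          (gX D ε j r * gPm D i (μm i)))
  | h_x (ε : Bool) (i j : D.I0) (m r : ℤ) (hm : m ≠ 0) :
      Rel (gH D i m * gX D ε j r - gX D ε j r * gH D i m)
        ((((sg ε : ℤ) : ℂ) * D.hxCoef i j m) • gX D ε j (m + r))
  | xp_xm (i j : D.I0) (r r' : ℤ) :
      Rel (gXp D i r * gXm D j r' - gXm D j r' * gXp D i r)
        (if i = j ∧ ((D.N i : ℤ) ∣ r') then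
            (D.qd i)⁻¹ • (gPp D i (r + r') - gPm D i (r + r'))
          else 0)
  | xx (ε : Bool) (i j : D.I0) (r r' : ℤ) :
      Rel (∑ K : Finset (Fin D.M),
            ((-1 : ℂ) ^ K.card *
                ∏ s ∈ K, (D.ζ ^ ((s : ℕ) + 1) * D.q ^ (sg ε * D.Cs i j (s : ℕ)))) •
              (gX D ε i (r + (D.M : ℤ) - (K.card : ℤ)) * gX D ε j (r' + (K.card : ℤ))))
          (∑ K : Finset (Fin D.M),
            ((-1 : ℂ) ^ K.card * (∏ s ∈ K, D.ζ ^ ((s : ℕ) + 1)) *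
                ∏ s ∈ Kᶜ, D.q ^ (sg ε * D.Cs i j (s : ℕ))) •
              (gX D ε j (r' + (K.card : ℤ)) * gX D ε i (r + (D.M : ℤ) - (K.card : ℤ))))
  | serre1 (ε : Bool) (i j : D.I0) (hij : D.Cij i j = -1) (hne : i ≠ j) (k m1 m2 : ℤ) :
      Rel (∑ t ∈ Finset.range D.M,
            D.pcoef (sg ε) i j t •
              (serreS D ε i j k (m1 + (D.pa i j t : ℤ)) (m2 + (D.pb i j t : ℤ)) +
               serreS D ε i j k (m2 + (D.pa i j t : ℤ)) (m1 + (D.pb i j t : ℤ))))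
          0
  | serre2 (ε : Bool) (i : D.I0) (hii : D.Ciσ i = -1) (m : Fin 3 → ℤ) :
      Rel (∑ π : Equiv.Perm (Fin 3),
            ((D.sq ^ (3 : ℕ)) •
                (gX D ε i (m (π 0) - sg ε) * gX D ε i (m (π 1)) * gX D ε i (m (π 2)))
              - (D.sq + D.sq⁻¹) •
                (gX D ε i (m (π 0)) * gX D ε i (m (π 1) - sg ε) * gX D ε i (m (π 2)))
              + (D.sq ^ (3 : ℕ))⁻¹ •
                (gX D ε i (m (π 0)) * gX D ε i (m (π 1)) * gX D ε i (m (π 2) - sg ε))))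
          0
  | serre3 (ε : Bool) (i : D.I0) (hii : D.Ciσ i = -1) (m : Fin 3 → ℤ) :
      Rel (∑ π : Equiv.Perm (Fin 3),
            (((D.sq ^ (3 : ℕ))⁻¹) •
                (gX D ε i (m (π 0) + sg ε) * gX D ε i (m (π 1)) * gX D ε i (m (π 2)))
              - (D.sq + D.sq⁻¹) •
                (gX D ε i (m (π 0)) * gX D ε i (m (π 1) + sg ε) * gX D ε i (m (π 2)))
              + (D.sq ^ (3 : ℕ)) •
                (gX D ε i (m (π 0)) * gX D ε i (m (π 1)) * gX D ε i (m (π 2) + sg ε))))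
          0

/-- The shifted twisted quantum affine algebra `𝒰_q^{μ₊,μ₋}(ĝ^σ)`, presented by the
Drinfeld generators and relations. -/
abbrev U := RingQuot (Rel D μp μm)

/-- the canonical projection from the free algebra -/
def mkU : FA D →ₐ[ℂ] U D μp μm := RingQuot.mkAlgHom ℂ (Rel D μp μm)

/-- the generator `x^+_{i,r}` of `𝒰_q^{μ₊,μ₋}(ĝ^σ)` -/
def xp (i : D.I0) (r : ℤ) : U D μp μm := mkU D μp μm (gXp D i r)
/-- the generator `x^-_{i,r}` -/
def xm (i : D.I0) (r : ℤ) : U D μp μm := mkU D μp μm (gXm D i r)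
/-- the generator `φ^+_{i,r}` -/
def pp (i : D.I0) (r : ℤ) : U D μp μm := mkU D μp μm (gPp D i r)
/-- the generator `φ^-_{i,r}` -/
def pm (i : D.I0) (r : ℤ) : U D μp μm := mkU D μp μm (gPm D i r)
/-- the generator `φ^+_{i,-α_i(μ₊)}⁻¹` -/
def ppInv (i : D.I0) : U D μp μm := mkU D μp μm (gPpInv D i)
/-- the generator `φ^-_{i,α_i(μ₋)}⁻¹` -/
def pmInv (i : D.I0) : U D μp μm := mkU D μp μm (gPmInv D i)
/-- the generator `h_{i,m}` -/
def hgen (i : D.I0) (m : ℤ) : U D μp μm := mkU D μp μm (gH D i m)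

end TQA
namespace TQA

/-- The isomorphism of free algebras induced by a bijection of their generators. -/
def freeAlgebraCongr (R : Type*) [CommSemiring R] {X Y : Type*} (e : X ≃ Y) :
    FreeAlgebra R X ≃ₐ[R] FreeAlgebra R Y :=
  AlgEquiv.ofAlgHom (FreeAlgebra.lift R (FreeAlgebra.ι R ∘ e))
    (FreeAlgebra.lift R (FreeAlgebra.ι R ∘ e.symm))
    (by ext; simp) (by ext; simp)

@[simp]
lemma freeAlgebraCongr_ι (R : Type*) [CommSemiring R] {X Y : Type*} (e : X ≃ Y) (a : X) :
    freeAlgebraCongr R e (FreeAlgebra.ι R a) = FreeAlgebra.ι R (e a) := by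
  simp [freeAlgebraCongr]

lemma freeAlgebraCongr_symm (R : Type*) [CommSemiring R] {X Y : Type*} (e : X ≃ Y) :
    (freeAlgebraCongr R e).symm = freeAlgebraCongr R e.symm :=
  rfl

section ModeShift

variable {D : TQAData} (ν : Bool → D.I0 → ℤ)

/-- The translation `ν^+ + ν^-` of the modes of `φ^±` that accompanies translations `ν^±` of the
modes of `x^±` (with `ν true = ν^+` and `ν false = ν^-`). -/
def cartanShift : D.I0 → ℤ := ν true + ν false

/-- The translation of the modes of the Drinfeld generators: those of `x^±` move by `ν^±` and those
of `φ^±` by `ν^+ + ν^-`. -/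
def genShift : Equiv.Perm (TQAGen D) where
  toFun
    | .xp i r => .xp i (r + ν true i)
    | .xm i r => .xm i (r + ν false i)
    | .pp i r => .pp i (r + cartanShift ν i)
    | .pm i r => .pm i (r + cartanShift ν i)
    | .ppInv i => .ppInv i
    | .pmInv i => .pmInv i
    | .hh i m => .hh i m
  invFun
    | .xp i r => .xp i (r - ν true i)
    | .xm i r => .xm i (r - ν false i)
    | .pp i r => .pp i (r - cartanShift ν i)
    | .pm i r => .pm i (r - cartanShift ν i)
    | .ppInv i => .ppInv i
    | .pmInv i => .pmInv i
    | .hh i m => .hh i m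
  left_inv a := by cases a <;> simp
  right_inv a := by cases a <;> simp

/-- The automorphism of the free algebra translating the modes of its generators. -/
def modeShift : FA D ≃ₐ[ℂ] FA D := freeAlgebraCongr ℂ (genShift ν)

lemma cartanShift_neg : cartanShift (-ν) = -cartanShift ν := by
  simp only [cartanShift, Pi.neg_apply, neg_add]

lemma genShift_symm : (genShift ν).symm = genShift (-ν) := by
  ext a
  cases a <;> simp [genShift, cartanShift_neg, sub_eq_add_neg]

lemma modeShift_symm : (modeShift ν).symm = modeShift (-ν) := by
  rw [modeShift, freeAlgebraCongr_symm, genShift_symm, modeShift]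

lemma modeShift_ι (a : TQAGen D) :
    modeShift ν (FreeAlgebra.ι ℂ a) = FreeAlgebra.ι ℂ (genShift ν a) :=
  freeAlgebraCongr_ι ℂ _ a

lemma modeShift_gXp (i : D.I0) (r : ℤ) : modeShift ν (gXp D i r) = gXp D i (r + ν true i) :=
  modeShift_ι ν _

lemma modeShift_gXm (i : D.I0) (r : ℤ) : modeShift ν (gXm D i r) = gXm D i (r + ν false i) :=
  modeShift_ι ν _

lemma modeShift_gX (ε : Bool) (i : D.I0) (r : ℤ) :
    modeShift ν (gX D ε i r) = gX D ε i (r + ν ε i) :=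
  match ε with
  | true => modeShift_gXp ν i r
  | false => modeShift_gXm ν i r

lemma modeShift_gPp (i : D.I0) (r : ℤ) :
    modeShift ν (gPp D i r) = gPp D i (r + cartanShift ν i) :=
  modeShift_ι ν _

lemma modeShift_gPm (i : D.I0) (r : ℤ) :
    modeShift ν (gPm D i r) = gPm D i (r + cartanShift ν i) :=
  modeShift_ι ν _

lemma modeShift_gPpInv (i : D.I0) : modeShift ν (gPpInv D i) = gPpInv D i :=
  modeShift_ι ν _

lemma modeShift_gPmInv (i : D.I0) : modeShift ν (gPmInv D i) = gPmInv D i :=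
  modeShift_ι ν _

lemma modeShift_gH (i : D.I0) (m : ℤ) : modeShift ν (gH D i m) = gH D i m :=
  modeShift_ι ν _

lemma modeShift_serreS (ε : Bool) (i j : D.I0) (k n₁ n₂ : ℤ) :
    modeShift ν (serreS D ε i j k n₁ n₂) =
      serreS D ε i j (k + ν ε j) (n₁ + ν ε i) (n₂ + ν ε i) := by
  simp only [serreS, map_add, map_sub, map_mul, map_smul, modeShift_gX]

lemma IsCartanGen.genShift {a : TQAGen D} (ha : IsCartanGen D a) :
    IsCartanGen D (genShift ν a) := by
  cases a <;> exact ha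

variable {ν} {μp μm : D.I0 → ℤ}

lemma modeShift_xp_xm_bracket (i : D.I0) {j : D.I0} (hν : (D.N j : ℤ) ∣ ν false j) (r r' : ℤ) :
    modeShift ν (if i = j ∧ (D.N i : ℤ) ∣ r' then
        (D.qd i)⁻¹ • (gPp D i (r + r') - gPm D i (r + r')) else 0) =
      if i = j ∧ (D.N i : ℤ) ∣ r' + ν false j then
        (D.qd i)⁻¹ • (gPp D i (r + ν true i + (r' + ν false j)) -
          gPm D i (r + ν true i + (r' + ν false j))) else 0 := by
  obtain rfl | hij := eq_or_ne i j
  · have modes : r + r' + cartanShift ν i = r + ν true i + (r' + ν false i) :=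
      add_add_add_comm r r' _ _
    simp only [apply_ite (modeShift ν), map_zero, map_smul, map_sub, modeShift_gPp, modeShift_gPm,
      modes, dvd_add_left hν]
  · simp only [hij, false_and, if_false, map_zero]

lemma Rel.map_modeShift (hν : ∀ ε i, (D.N i : ℤ) ∣ ν ε i) {x y : FA D} (h : Rel D μp μm x y) :
    Rel D (μp - cartanShift ν) (μm + cartanShift ν) (modeShift ν x) (modeShift ν y) := by
  have lead_pp (i : D.I0) : -μp i + cartanShift ν i = -(μp - cartanShift ν) i := by
    rw [Pi.sub_apply, neg_sub, neg_add_eq_sub]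
  have lead_pm (i : D.I0) : μm i + cartanShift ν i = (μm + cartanShift ν) i := rfl
  -- Collecting the translation next to the translated mode `a` makes the image of a relation
  -- syntactically the relation of the same kind at the mode `a + ν ε i`.
  have add_comm_x (a b : ℤ) (ε i) : a + b + ν ε i = a + ν ε i + b := add_right_comm a b _
  have sub_comm_x (a b : ℤ) (ε i) : a - b + ν ε i = a + ν ε i - b := sub_add_eq_add_sub a b _
  have add_comm_p (a b : ℤ) (i) : a + b + cartanShift ν i = a + cartanShift ν i + b :=
    add_right_comm a b _
  have sub_comm_p (a b : ℤ) (i) : a - b + cartanShift ν i = a + cartanShift ν i - b :=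
    sub_add_eq_add_sub a b _
  cases h with
    simp only [map_sum, map_add, map_sub, map_mul, map_smul, map_zero, map_one, modeShift_ι,
      modeShift_gX, modeShift_gXp, modeShift_gXm, modeShift_gPp, modeShift_gPm, modeShift_gPpInv,
      modeShift_gPmInv, modeShift_gH, modeShift_serreS, modeShift_xp_xm_bracket _ (hν _ _),
      add_comm_x, sub_comm_x, add_comm_p, sub_comm_p, lead_pp, lead_pm]
  | x_supp ε i r hr => exact .x_supp ε i _ ((dvd_add_left (hν ε i)).not.mpr hr)
  | h_supp i m hm => exact .h_supp i m hm
  | pp_supp i r hr => exact .pp_supp i _ (lead_pp i ▸ add_lt_add_left hr _)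
  | pm_supp i r hr => exact .pm_supp i _ (add_lt_add_left hr _)
  | cartan_comm a b ha hb => exact .cartan_comm _ _ (ha.genShift ν) (hb.genShift ν)
  | pp_inv_l i => exact .pp_inv_l i
  | pp_inv_r i => exact .pp_inv_r i
  | pm_inv_l i => exact .pm_inv_l i
  | pm_inv_r i => exact .pm_inv_r i
  | pp_exp i m => exact .pp_exp i m
  | pm_exp i m => exact .pm_exp i m
  | lead_conj_p ε i j r => exact .lead_conj_p ε i j _
  | lead_conj_m ε i j r => exact .lead_conj_m ε i j _
  | h_x ε i j m r hm => simpa only [add_assoc, add_comm (ν ε j)] using .h_x ε i j m (r + ν ε j) hm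
  | xp_xm i j r r' => exact .xp_xm i j _ _
  | xx ε i j r r' => exact .xx ε i j _ _
  | serre1 ε i j hij hne k m₁ m₂ => exact .serre1 ε i j hij hne _ _ _
  | serre2 ε i hii m => exact .serre2 ε i hii (m · + ν ε i)
  | serre3 ε i hii m => exact .serre3 ε i hii (m · + ν ε i)

open scoped Function in
lemma rel_on_modeShift_symm (hν : ∀ ε i, (D.N i : ℤ) ∣ ν ε i) :
    (Rel D μp μm on (modeShift ν).symm) = Rel D (μp - cartanShift ν) (μm + cartanShift ν) := by
  ext x y
  constructor <;> intro h
  · simpa only [AlgEquiv.apply_symm_apply] using h.map_modeShift hν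
  · have hneg : ∀ ε i, (D.N i : ℤ) ∣ (-ν) ε i := fun ε i => (hν ε i).neg_right
    simpa only [cartanShift_neg, sub_neg_eq_add, sub_add_cancel, ← sub_eq_add_neg,
      add_sub_cancel_right, ← modeShift_symm] using h.map_modeShift hneg

end ModeShift

lemma natCast_N_dvd_iff (D : TQAData) (i : D.I0) (k : ℤ) :
    (D.N i : ℤ) ∣ k ↔ (D.fixed i → (D.M : ℤ) ∣ k) := by
  unfold TQAData.N
  split_ifs with h <;> simp [h]

theorem iso_depends_only_on_total_shift_general (D : TQAData) {μp μm μp' μm' : D.I0 → ℤ}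
    (hsum : μp + μm = μp' + μm') (hdvd : ∀ i, D.fixed i → (D.M : ℤ) ∣ μp i - μp' i) :
    Nonempty (U D μp μm ≃ₐ[ℂ] U D μp' μm') := by
  let ν : Bool → D.I0 → ℤ := fun ε => if ε then μp - μp' else 0
  have hν : ∀ ε i, (D.N i : ℤ) ∣ ν ε i
    | true, i => (natCast_N_dvd_iff D i _).mpr (hdvd i)
    | false, _ => dvd_zero _
  have shift_ν : cartanShift ν = μp - μp' := add_zero _
  have hp : μp - cartanShift ν = μp' := by rw [shift_ν, sub_sub_cancel]
  have hm : μm + cartanShift ν = μm' := by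
    rw [shift_ν, ← add_sub_assoc, add_comm μm, hsum, add_sub_cancel_left]
  unfold U
  rw [← hp, ← hm, ← rel_on_modeShift_symm hν]
  exact ⟨RingQuot.algEquivQuotAlgEquiv (modeShift ν) (Rel D μp μm)⟩

/-- **Shifted twisted quantum affine algebras depend only on the total shift.**
For any coweights `μ₊, μ₋ ∈ Λ`, the shifted twisted quantum affine algebra
`𝒰_q^{μ₊,μ₋}(ĝ^σ)` depends, up to isomorphism, only on the sum `μ = μ₊ + μ₋`:
there is an algebra isomorphism `𝒰_q^{μ₊,μ₋}(ĝ^σ) ≅ 𝒰_q^{0,μ₊+μ₋}(ĝ^σ)`. -/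
theorem iso_depends_only_on_total_shift (D : TQAData) (μp μm : D.I0 → ℤ)
    (hμp : ∀ i, D.fixed i → (D.M : ℤ) ∣ μp i) (hμm : ∀ i, D.fixed i → (D.M : ℤ) ∣ μm i) :
    Nonempty (U D μp μm ≃ₐ[ℂ] U D 0 (μp + μm)) :=
  iso_depends_only_on_total_shift_general D (by simp) (by simpa using hμp)

end TQA
end
end

section
/- Let ĝ^σ be a twisted affine type other than A₂ₙ⁽²⁾, let μ∈Λ, μ′∈−Λ⁺ and a∈ℂ*. For i∈I₀ set ι_i = 1+(M−1)δ_{σ(i)=i} and n_i(μ′) = −α_i(μ′)/ι_i. Then the assignment x_i^+(z) ↦ x_i^+(z), x_i^−(z) ↦ (1−(az^{−1})^{ι_i})^{n_i(μ′)} x_i^−(z), φ_i^±(z) ↦ (1−(az)^{ι_i})^{n_i(μ′)} φ_i^±(z), on Drinfeld currents defines an algebra homomorphism ι_{μ,μ′,a} : U_q^μ(ĝ^σ) → U_q^{μ+μ′}(ĝ^σ) (the shift homomorphism). -/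
noncomputable section

open scoped TensorProduct

namespace TQA

variable (D : TQAData)

/-- `ι_i = 1 + (M-1)δ_{σ(i)=i}` (equal to `N_i`) -/
def iot (i : D.I0) : ℕ := D.N i

/-- `n_i(μ') = -α_i(μ')/ι_i` for an antidominant coweight `μ'` -/
def nshift (μ' : D.I0 → ℤ) (i : D.I0) : ℕ := ((-μ' i) / (iot D i : ℤ)).toNat

/-!
A current `x_i^±(z)` or `φ_i^±(z)` is replaced by its product with a polynomial in `z`, and the
defining relations survive for three reasons.

The quadratic and Serre relations are multilinear in the modes, invariant under translation of the
modes, and symmetrized over permutations of currents attached to the same node; multiplying each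
current by the factor of its node therefore multiplies the whole relation by a symmetric polynomial.

The exponential formula for `φ_i^±` says that `∑_m m h_{i,m} z^m` is, up to a scalar, the
logarithmic derivative of `φ_i^±`, so multiplying `φ_i^±` translates each `h_{i,m}` by a scalar.

At `∞` one has `(1 - (az)^d)^n = (-a^d)^n z^{dn} (1 - (az)^{-d})^n`. Since `ι_i n_i(μ') = -α_i(μ')`,
this moves the leading mode of `φ_i^-` from `α_i(μ + μ')` to `α_i(μ)`, as required, and multiplies
it by the invertible scalar `(-a^{ι_i})^{n_i(μ')}`.
-/

open scoped Polynomial PowerSeries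

section Currents

variable {R V W : Type*} [CommSemiring R] [AddCommMonoid V] [Module R V] [AddCommMonoid W]
  [Module R W]

/-- Multiplication of a current `F(z) = ∑_r F_r z^r`, encoded by its modes `r ↦ F_r`, by the
variable `z`. -/
def mulVar : Module.End R (ℤ → V) := LinearMap.funLeft R V (· - 1)

lemma mulVar_pow_apply (k : ℕ) (F : ℤ → V) (r : ℤ) :
    (mulVar (R := R) ^ k) F r = F (r - k) := by
  induction k generalizing r with
  | zero => simp
  | succ k ih =>
    rw [pow_succ', Module.End.mul_apply, mulVar, LinearMap.funLeft_apply, ← mulVar, ih]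
    congr 1
    push_cast
    ring

/-- Multiplication of a current by a polynomial in its variable. -/
def currentMul (p : R[X]) : Module.End R (ℤ → V) := Polynomial.aeval mulVar p

lemma currentMul_apply (p : R[X]) (F : ℤ → V) (r : ℤ) :
    currentMul p F r = p.sum fun k c => c • F (r - k) := by
  simp only [currentMul, Polynomial.aeval_eq_sum_range, Polynomial.sum_over_range, zero_smul,
    implies_true, LinearMap.sum_apply, LinearMap.smul_apply, Finset.sum_apply, Pi.smul_apply,
    mulVar_pow_apply]

lemma currentMul_expand_apply (d : ℕ) (p : R[X]) (F : ℤ → V) (r : ℤ) :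
    currentMul (Polynomial.expand R d p) F r = p.sum fun k c => c • F (r - (d * k : ℕ)) := by
  rw [currentMul, Polynomial.expand_aeval]
  simp only [Polynomial.aeval_eq_sum_range, Polynomial.sum_over_range, zero_smul, implies_true,
    LinearMap.sum_apply, LinearMap.smul_apply, Finset.sum_apply, Pi.smul_apply, ← pow_mul,
    mulVar_pow_apply]

lemma currentMul_one (F : ℤ → V) : currentMul (1 : R[X]) F = F := by
  simp [currentMul]

lemma currentMul_expand_congr (d : ℕ) (p : R[X]) {F G : ℤ → V} {r : ℤ}
    (h : ∀ k : ℕ, F (r - (d * k : ℕ)) = G (r - (d * k : ℕ))) :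
    currentMul (Polynomial.expand R d p) F r = currentMul (Polynomial.expand R d p) G r := by
  simp only [currentMul_expand_apply, h]

lemma currentMul_expand_ite_dvd (d : ℕ) (p : R[X]) (F : ℤ → V) (r : ℤ) :
    currentMul (Polynomial.expand R d p) (fun r => if (d : ℤ) ∣ r then F r else 0) r =
      if (d : ℤ) ∣ r then currentMul (Polynomial.expand R d p) F r else 0 := by
  have hdvd (k : ℕ) : (d : ℤ) ∣ r - (d * k : ℕ) ↔ (d : ℤ) ∣ r := by
    rw [Nat.cast_mul]; exact dvd_sub_left (dvd_mul_right _ _)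
  split_ifs with hr
  · exact currentMul_expand_congr d p fun k => if_pos ((hdvd k).2 hr)
  · rw [currentMul_expand_congr d p (G := 0) fun k => if_neg fun h => hr ((hdvd k).1 h), map_zero,
      Pi.zero_apply]

lemma map_currentMul (L : V →ₗ[R] W) (p : R[X]) (F : ℤ → V) (r : ℤ) :
    L (currentMul p F r) = currentMul p (fun r => L (F r)) r := by
  simp only [currentMul_apply, Polynomial.sum, map_sum, map_smul]

lemma currentMul_comp_add_left (p : R[X]) (F : ℤ → V) (m r : ℤ) :
    currentMul p (fun r => F (m + r)) r = currentMul p F (m + r) := by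
  simp only [currentMul_apply, add_sub_assoc]

lemma map_currentMul_eq_of_forall {L L' : V →ₗ[R] W} (p : R[X]) {F : ℤ → V} {m : ℤ}
    (h : ∀ r, L (F r) = L' (F (m + r))) (r : ℤ) :
    L (currentMul p F r) = L' (currentMul p F (m + r)) := by
  rw [map_currentMul, funext h, ← currentMul_comp_add_left, map_currentMul]

lemma currentMul_eq_zero_of_neg (p : R[X]) {F : ℤ → V} (hF : ∀ r < 0, F r = 0) {r : ℤ}
    (hr : r < 0) : currentMul p F r = 0 := by
  rw [currentMul_apply]
  exact Finset.sum_eq_zero fun k _ => by simp only [hF (r - k) (by omega), smul_zero]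

lemma currentMul_zero_of_forall_neg (p : R[X]) {F : ℤ → V} (hF : ∀ r < 0, F r = 0) :
    currentMul p F 0 = p.coeff 0 • F 0 := by
  rw [currentMul_apply, Polynomial.sum, Finset.sum_eq_single 0]
  · simp
  · intro k _ hk
    rw [hF _ (by omega), smul_zero]
  · intro h
    rw [Polynomial.notMem_support_iff.1 h, zero_smul]

/-- The substitution `z ↦ z⁻¹`, which turns `p(z)` into `z^{-N} (z^N p(z⁻¹))`. -/
lemma currentMul_reflect {p : R[X]} {N : ℕ} (hp : p.natDegree ≤ N) (F : ℤ → V) (s r : ℤ) :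
    currentMul p F (s + N - r) = currentMul (p.reflect N) (fun r => F (s - r)) r := by
  have hp' : (p.reflect N).natDegree ≤ N := (Polynomial.natDegree_reflect_le).trans (by simp [hp])
  rw [currentMul_apply, currentMul_apply, Polynomial.sum_over_range' _ (by simp) (N + 1) (by omega),
    Polynomial.sum_over_range' _ (by simp) (N + 1) (by omega), ← Finset.sum_range_reflect]
  refine Finset.sum_congr rfl fun k hk => ?_
  have hk : k ≤ N := Finset.mem_range_succ_iff.1 hk
  rw [Nat.add_sub_cancel, Polynomial.coeff_reflect, Polynomial.revAt_le hk]
  congr 2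
  push_cast [hk]
  ring

/-- The point is that `∏ s, p s (z_s)` is invariant under the symmetrization, so it multiplies the
whole relation. -/
theorem sum_perm_currentMul_eq_zero {κ τ : Type*} [Finite κ]
    (Γ : Finset (Equiv.Perm κ)) (T : Finset τ) (Φ : τ → MultilinearMap R (fun _ : κ => V) W)
    (w : τ → κ → ℤ) {p : κ → R[X]} (hp : ∀ π ∈ Γ, ∀ s, p (π s) = p s) {F : κ → ℤ → V}
    (h : ∀ m : κ → ℤ, ∑ π ∈ Γ, ∑ t ∈ T, Φ t (fun s => F s (m (π s) + w t s)) = 0) (m : κ → ℤ) :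
    ∑ π ∈ Γ, ∑ t ∈ T, Φ t (fun s => currentMul (p s) (F s) (m (π s) + w t s)) = 0 := by
  classical
  cases nonempty_fintype κ
  have expand (π) (hπ : π ∈ Γ) (t : τ) :
      Φ t (fun s => currentMul (p s) (F s) (m (π s) + w t s)) =
        ∑ k ∈ Fintype.piFinset fun s => (p s).support, (∏ s, (p s).coeff (k s)) •
          Φ t (fun s => F s (m (π s) - k (π s) + w t s)) := by
    simp only [currentMul_apply, Polynomial.sum, MultilinearMap.map_sum_finset,
      MultilinearMap.map_smul_univ]
    have hp' (s : κ) : p (π.symm s) = p s := by simpa using (hp π hπ (π.symm s)).symm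
    refine Finset.sum_equiv (π.arrowCongr (Equiv.refl ℕ)) (fun k => ?_) fun k _ => ?_
    · simp only [Fintype.mem_piFinset]
      exact (π.symm.forall_congr_right (q := fun s => k s ∈ (p s).support)).symm.trans
        (by simp only [hp']; rfl)
    · rw [← π.symm.prod_comp fun s => (p s).coeff (k s)]
      simp only [hp', Equiv.arrowCongr_apply, Function.comp_apply, Equiv.symm_apply_apply,
        Equiv.refl_apply, sub_add_eq_add_sub]
  calc _ = ∑ π ∈ Γ, ∑ t ∈ T, ∑ k ∈ Fintype.piFinset fun s => (p s).support,
          (∏ s, (p s).coeff (k s)) • Φ t (fun s => F s (m (π s) - k (π s) + w t s)) :=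
        Finset.sum_congr rfl fun π hπ => Finset.sum_congr rfl fun t _ => expand π hπ t
    _ = ∑ k ∈ Fintype.piFinset fun s => (p s).support, (∏ s, (p s).coeff (k s)) •
          ∑ π ∈ Γ, ∑ t ∈ T, Φ t (fun s => F s (m (π s) - k (π s) + w t s)) := by
        simp only [Finset.smul_sum]
        exact (Finset.sum_congr rfl fun π _ => Finset.sum_comm).trans Finset.sum_comm
    _ = 0 := Finset.sum_eq_zero fun k _ => by rw [h fun s => m s - k s, smul_zero]

end Currents

section Words

variable {R A : Type*} [CommSemiring R] [Semiring A] [Algebra R A]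

variable (R) in
/-- The multilinear form `v ↦ v (σ 0) * v (σ 1) * ⋯`, through which the terms of the quadratic and
Serre relations are expressed. -/
def word {n : ℕ} (σ : Equiv.Perm (Fin n)) : MultilinearMap R (fun _ : Fin n => A) A :=
  (MultilinearMap.mkPiAlgebraFin R n A).domDomCongr σ

lemma word_two (σ : Equiv.Perm (Fin 2)) (v : Fin 2 → A) : word R σ v = v (σ 0) * v (σ 1) := by
  simp [word]

lemma word_three (σ : Equiv.Perm (Fin 3)) (v : Fin 3 → A) :
    word R σ v = v (σ 0) * v (σ 1) * v (σ 2) := by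
  simp [word, mul_assoc]

end Words

section ShiftPoly

/-- The polynomial `(1 - (a z)^d)^n` by which a shift homomorphism multiplies a current. -/
def shiftPoly {R : Type*} [CommRing R] (a : R) (d n : ℕ) : R[X] :=
  (1 - (Polynomial.C a * Polynomial.X) ^ d) ^ n

lemma shiftPoly_eq_expand {R : Type*} [CommRing R] (a : R) (d n : ℕ) :
    shiftPoly a d n = Polynomial.expand R d ((1 - Polynomial.C (a ^ d) * Polynomial.X) ^ n) := by
  simp only [shiftPoly, mul_pow, map_pow, map_sub, map_one, map_mul, Polynomial.expand_C,
    Polynomial.expand_X]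

lemma coeff_zero_shiftPoly {R : Type*} [CommRing R] (a : R) {d : ℕ} (hd : 0 < d) (n : ℕ) :
    (shiftPoly a d n).coeff 0 = 1 := by
  simp [shiftPoly, Polynomial.coeff_zero_eq_eval_zero, hd.ne']

lemma natDegree_one_sub_pow_le {R : Type*} [CommRing R] (a : R) (d : ℕ) :
    (1 - (Polynomial.C a * Polynomial.X) ^ d).natDegree ≤ d := by
  rw [mul_pow, ← Polynomial.C_pow]
  exact (Polynomial.natDegree_sub_le_of_le (by simp)
    (Polynomial.natDegree_C_mul_X_pow_le _ d)).trans (max_self d).le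

lemma natDegree_shiftPoly_le {R : Type*} [CommRing R] (a : R) (d n : ℕ) :
    (shiftPoly a d n).natDegree ≤ d * n := by
  rw [mul_comm]
  exact Polynomial.natDegree_pow_le_of_le n (natDegree_one_sub_pow_le a d)

lemma currentMul_shiftPoly_apply {R V : Type*} [CommRing R] [AddCommGroup V] [Module R V] (a : R)
    (d n : ℕ) (F : ℤ → V) (r : ℤ) :
    currentMul (shiftPoly a d n) F r =
      ∑ k ∈ Finset.range (n + 1),
        ((n.choose k : R) * (-1) ^ k * a ^ (d * k)) • F (r - (d * k : ℕ)) := by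
  have binomial : shiftPoly a d n = ∑ k ∈ Finset.range (n + 1),
      Polynomial.C ((n.choose k : R) * (-1) ^ k * a ^ (d * k)) * Polynomial.X ^ (d * k) := by
    rw [shiftPoly, sub_eq_neg_add, add_pow]
    refine Finset.sum_congr rfl fun k _ => ?_
    simp only [map_mul, map_pow, map_neg, map_one, map_natCast]
    ring
  simp only [currentMul, binomial, map_sum, ← Polynomial.smul_eq_C_mul, map_smul,
    Polynomial.aeval_X_pow, LinearMap.sum_apply, Finset.sum_apply, LinearMap.smul_apply,
    Pi.smul_apply, mulVar_pow_apply]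

lemma reflect_one_sub_pow {K : Type*} [Field K] {a : K} (ha : a ≠ 0) (d : ℕ) :
    (1 - (Polynomial.C a * Polynomial.X) ^ d).reflect d =
      Polynomial.C (-(a ^ d)) * (1 - (Polynomial.C a⁻¹ * Polynomial.X) ^ d) := by
  have hC : Polynomial.C a ^ d * Polynomial.C a⁻¹ ^ d = 1 := by
    rw [← mul_pow, ← Polynomial.C_mul, mul_inv_cancel₀ ha, Polynomial.C_1, one_pow]
  have hX : (Polynomial.X ^ d : K[X]).reflect d = 1 := by
    simp
  rw [mul_pow, ← Polynomial.C_pow, Polynomial.reflect_sub, Polynomial.reflect_one,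
    Polynomial.reflect_C_mul, hX, Polynomial.C_neg, Polynomial.C_pow, mul_pow]
  linear_combination -(Polynomial.X ^ d * hC)

lemma reflect_shiftPoly {K : Type*} [Field K] {a : K} (ha : a ≠ 0) (d n : ℕ) :
    (shiftPoly a d n).reflect (d * n) =
      Polynomial.C ((-(a ^ d)) ^ n) * shiftPoly a⁻¹ d n := by
  induction n with
  | zero => simp [shiftPoly]
  | succ n ih =>
    have succ (b : K) : shiftPoly b d (n + 1) =
        shiftPoly b d n * (1 - (Polynomial.C b * Polynomial.X) ^ d) := pow_succ _ n
    rw [succ, Nat.mul_succ, Polynomial.reflect_mul _ _ (natDegree_shiftPoly_le a d n)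
      (natDegree_one_sub_pow_le a d), ih, reflect_one_sub_pow ha, succ, pow_succ, Polynomial.C_mul]
    ring

end ShiftPoly

section LogDerivative

variable {A : Type*} [Semiring A]

/-- The Euler operator `z d/dz` on power series; the coefficients need not commute. -/
def euler (f : A⟦X⟧) : A⟦X⟧ := PowerSeries.mk fun n => n • PowerSeries.coeff n f

lemma euler_mul (f g : A⟦X⟧) : euler (f * g) = euler f * g + f * euler g := by
  ext n
  simp only [euler, map_add, PowerSeries.coeff_mk, PowerSeries.coeff_mul, Finset.smul_sum,
    ← Finset.sum_add_distrib]
  refine Finset.sum_congr rfl fun x hx => ?_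
  rw [← Finset.HasAntidiagonal.mem_antidiagonal.1 hx, add_smul, smul_mul_assoc, mul_smul_comm]

lemma euler_mul_of_euler_eq {f g s t : A⟦X⟧} (hf : euler f = s * f) (hg : euler g = t * g)
    (hft : Commute f t) : euler (f * g) = (s + t) * (f * g) := by
  rw [euler_mul, hf, hg, ← mul_assoc f, hft.eq, add_mul, mul_assoc, mul_assoc]

lemma euler_one : euler (1 : A⟦X⟧) = 0 := by
  ext n
  cases n <;> simp [euler, PowerSeries.coeff_one]

lemma euler_pow_of_euler_eq {f s : A⟦X⟧} (hf : euler f = s * f) (hfs : Commute f s) (n : ℕ) :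
    euler (f ^ n) = n • s * f ^ n := by
  induction n with
  | zero => rw [pow_zero, euler_one, zero_smul, zero_mul]
  | succ n ih => rw [pow_succ', euler_mul_of_euler_eq hf ih (hfs.smul_right n), succ_nsmul']

lemma euler_one_sub_pow {R : Type*} [CommRing R] (a : R) {d : ℕ} (hd : 0 < d) :
    euler (1 - (PowerSeries.C a * PowerSeries.X) ^ d : R⟦X⟧) =
      (PowerSeries.mk fun m => if d ∣ m ∧ m ≠ 0 then -(d * a ^ m) else 0) *
        (1 - (PowerSeries.C a * PowerSeries.X) ^ d) := by
  ext m
  rw [mul_sub, mul_one, mul_pow, ← map_pow, mul_left_comm, map_sub, PowerSeries.coeff_C_mul,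
    PowerSeries.coeff_mul_X_pow', euler, PowerSeries.coeff_mk, map_sub, PowerSeries.coeff_C_mul,
    PowerSeries.coeff_one, PowerSeries.coeff_X_pow, PowerSeries.coeff_mk, PowerSeries.coeff_mk]
  by_cases hdm : d ∣ m
  · obtain ⟨k, rfl⟩ := hdm
    rcases k with _ | _ | k
    · simp [hd.ne']
    · simp [hd.ne']
    · have hsub : d * (k + 1 + 1) - d = d * (k + 1) := by rw [mul_add_one, Nat.add_sub_cancel]
      have hle : d ≤ d * (k + 1 + 1) := Nat.le_mul_of_pos_right _ (Nat.succ_pos _)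
      rw [hsub]
      simp only [mul_eq_zero, hd.ne', Nat.add_eq_zero_iff, one_ne_zero, and_false, and_self,
        or_self, ↓reduceIte, ne_eq, not_false_eq_true, mul_eq_left₀, Nat.add_eq_right, mul_zero,
        sub_self, nsmul_zero, dvd_mul_right, hle, mul_neg, sub_neg_eq_add]
      ring
  · have hm : m ≠ 0 := by rintro rfl; exact hdm (dvd_zero d)
    have hmd : m ≠ d := by rintro rfl; exact hdm dvd_rfl
    have hsub (hle : d ≤ m) : ¬ d ∣ m - d := fun h => hdm ((Nat.dvd_sub_iff_left hle dvd_rfl).1 h)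
    simp +contextual [hm, hmd, hdm, hsub]

lemma euler_shiftPoly {R : Type*} [CommRing R] (a : R) {d : ℕ} (hd : 0 < d) (n : ℕ) :
    euler (shiftPoly a d n : R⟦X⟧) =
      (PowerSeries.mk fun m => if d ∣ m ∧ m ≠ 0 then -(n * d * a ^ m) else 0) *
        (shiftPoly a d n : R⟦X⟧) := by
  have hs : (PowerSeries.mk fun m => if d ∣ m ∧ m ≠ 0 then -(n * d * a ^ m) else 0) =
      n • (PowerSeries.mk fun m => if d ∣ m ∧ m ≠ 0 then -(d * a ^ m) else 0 : R⟦X⟧) := by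
    ext m
    rw [map_nsmul, PowerSeries.coeff_mk, PowerSeries.coeff_mk, nsmul_eq_mul]
    split_ifs <;> ring
  have hcoe : (shiftPoly a d n : R⟦X⟧) = (1 - (PowerSeries.C a * PowerSeries.X) ^ d) ^ n := by
    simp [shiftPoly]
  rw [hs, hcoe, euler_pow_of_euler_eq (euler_one_sub_pow a hd) (Commute.all _ _)]

lemma euler_map {B : Type*} [Semiring B] (φ : A →+* B) (f : A⟦X⟧) :
    euler (PowerSeries.map φ f) = PowerSeries.map φ (euler f) := by
  ext n
  simp [euler]

/-- The part `∑_{r ≥ 0} F_r z^r` of a current. -/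
def nonnegPart (F : ℤ → A) : A⟦X⟧ := PowerSeries.mk fun n => F n

variable {R : Type*} [CommSemiring R] [Algebra R A]

lemma nonnegPart_currentMul (p : R[X]) {F : ℤ → A} (hF : ∀ r < 0, F r = 0) :
    nonnegPart (currentMul p F) =
      PowerSeries.map (algebraMap R A) (p : R⟦X⟧) * nonnegPart F := by
  ext n
  rw [PowerSeries.coeff_mul, nonnegPart, PowerSeries.coeff_mk, currentMul_apply,
    Polynomial.sum_over_range' _ (by simp) (n + p.natDegree + 1) (by omega),
    Finset.Nat.sum_antidiagonal_eq_sum_range_succ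
      (fun i j => PowerSeries.coeff i (PowerSeries.map (algebraMap R A) (p : R⟦X⟧)) *
        PowerSeries.coeff j (nonnegPart F))]
  refine Eq.symm <| Finset.sum_subset_zero_on_sdiff (Finset.range_mono (by omega))
    (fun k hk => ?_) fun k hk => ?_
  · have hk : n < k := by simpa using (Finset.mem_sdiff.1 hk).2
    rw [hF _ (by omega), smul_zero]
  · have hk : k ≤ n := Finset.mem_range_succ_iff.1 hk
    rw [PowerSeries.coeff_map, Polynomial.coeff_coe, nonnegPart, PowerSeries.coeff_mk,
      ← Algebra.smul_def, Nat.cast_sub hk]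

/-- The relation `Q(z) = Q_0 exp(c ∑_{m ≥ 1} H_m z^m)` between the modes of positive index, in the
form `z Q'(z) = (c ∑_{m ≥ 1} m H_m z^m) Q(z)`. -/
def ExpRecursion (c : R) (H Q : ℤ → A) : Prop :=
  ∀ m : ℕ, ((m : R) + 1) • Q (m + 1) =
    c • ∑ k ∈ Finset.range (m + 1), ((k : R) + 1) • (H (k + 1) * Q (m + 1 - (k + 1)))

lemma expRecursion_iff {c : R} {H Q : ℤ → A} :
    ExpRecursion c H Q ↔
      euler (nonnegPart Q) = (PowerSeries.mk fun m => (c * m) • H m) * nonnegPart Q := by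
  have coeff_succ (m : ℕ) : PowerSeries.coeff (m + 1)
      ((PowerSeries.mk fun m => (c * m) • H m) * nonnegPart Q) =
        c • ∑ k ∈ Finset.range (m + 1), ((k : R) + 1) • (H (k + 1) * Q (m + 1 - (k + 1))) := by
    rw [PowerSeries.coeff_mul, Finset.Nat.sum_antidiagonal_eq_sum_range_succ
      (fun i j => PowerSeries.coeff i (PowerSeries.mk fun m : ℕ => (c * m) • H m) *
        PowerSeries.coeff j (nonnegPart Q)), Finset.sum_range_succ', Finset.smul_sum]
    rw [PowerSeries.coeff_mk, Nat.cast_zero, mul_zero, zero_smul, zero_mul, add_zero]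
    refine Finset.sum_congr rfl fun k hk => ?_
    have hk : k ≤ m := Finset.mem_range_succ_iff.1 hk
    rw [PowerSeries.coeff_mk, nonnegPart, PowerSeries.coeff_mk, smul_mul_assoc, mul_smul,
      Nat.cast_sub (by omega)]
    push_cast
    rfl
  have coeff_euler (m : ℕ) : PowerSeries.coeff (m + 1) (euler (nonnegPart Q)) =
      ((m : R) + 1) • Q (m + 1) := by
    rw [euler, nonnegPart, PowerSeries.coeff_mk, PowerSeries.coeff_mk,
      ← Nat.cast_smul_eq_nsmul R, Nat.cast_succ, Nat.cast_succ]
  refine ⟨fun h => ?_, fun h m => by rw [← coeff_succ, ← h, coeff_euler]⟩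
  ext m
  cases m with
  | zero => simp [euler, PowerSeries.coeff_mul]
  | succ m => rw [coeff_euler, coeff_succ, h m]

lemma commute_map_algebraMap (f : R⟦X⟧) (g : A⟦X⟧) :
    Commute (PowerSeries.map (algebraMap R A) f) g := by
  ext n
  rw [PowerSeries.coeff_mul, PowerSeries.coeff_mul, ← Finset.Nat.sum_antidiagonal_swap]
  exact Finset.sum_congr rfl fun _ _ => Algebra.commutes _ _

lemma ExpRecursion.smul {c : R} {H Q : ℤ → A} (s : R) (h : ExpRecursion c H Q) :
    ExpRecursion c H (s • Q) := fun m => by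
  simp only [Pi.smul_apply, mul_smul_comm, smul_comm _ s, ← Finset.smul_sum, h m]

/-- Multiplying a current by `(1 - (a z)^d)^n` translates its logarithm by
`-n ∑_{d ∣ m} (d / m) (a z)^m`. -/
theorem ExpRecursion.currentMul_shiftPoly {R A : Type*} [CommRing R] [Ring A]
    [Algebra R A] {c a : R} {d n : ℕ} (hd : 0 < d) {H H' Q : ℤ → A}
    (hQ : ∀ r < 0, Q r = 0)
    (hH : ∀ m : ℕ, m ≠ 0 → (c * m) • H' m =
      (c * m) • H m - algebraMap R A (if d ∣ m then n * d * a ^ m else 0))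
    (h : ExpRecursion c H Q) : ExpRecursion c H' (currentMul (shiftPoly a d n) Q) := by
  rw [expRecursion_iff] at h ⊢
  have hs := congrArg (PowerSeries.map (algebraMap R A)) (euler_shiftPoly a hd n)
  rw [← euler_map, map_mul] at hs
  rw [nonnegPart_currentMul _ hQ, euler_mul_of_euler_eq hs h]
  · congr 1
    ext m
    simp only [map_add, PowerSeries.coeff_map, PowerSeries.coeff_mk]
    rcases eq_or_ne m 0 with rfl | hm
    · simp
    · rw [hH m hm]
      split_ifs <;> simp_all [sub_eq_neg_add]
  · exact commute_map_algebraMap _ _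

end LogDerivative

section Generators

variable (μp μm μ' : D.I0 → ℤ) (a : ℂ)

variable {D μp μm} in
lemma mkU_rel {x y : FA D} (h : Rel D μp μm x y) : mkU D μp μm x = mkU D μp μm y :=
  RingQuot.mkAlgHom_rel ℂ h

lemma N_pos (i : D.I0) : 0 < D.N i := by
  unfold TQAData.N
  split_ifs
  exacts [D.Mpos, Nat.one_pos]

lemma qd_ne_zero (i : D.I0) : D.qd i ≠ 0 := fun h => D.hqi1 i <| by
  rw [TQAData.qd, sub_eq_zero] at h
  nth_rewrite 2 [h]
  exact mul_inv_cancel₀ (D.hqi0 i)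

variable {μ'} in
lemma N_mul_nshift (hΛμ' : ∀ i, D.fixed i → (D.M : ℤ) ∣ μ' i) (hμ' : ∀ i, μ' i ≤ 0) (i : D.I0) :
    ((D.N i * nshift D μ' i : ℕ) : ℤ) = -μ' i := by
  have hdvd : (D.N i : ℤ) ∣ -μ' i := by
    rw [dvd_neg]
    unfold TQAData.N
    split_ifs with h
    · exact hΛμ' i h
    · simp
  have hnonneg : 0 ≤ -μ' i / (D.N i : ℤ) :=
    Int.ediv_nonneg (neg_nonneg.2 (hμ' i)) (Int.natCast_nonneg _)
  rw [Nat.cast_mul, nshift, iot, Int.toNat_of_nonneg hnonneg, Int.mul_ediv_cancel' hdvd]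

/-- The factor `(1 - (az)^{ι_i})^{n_i(μ')}` attached to the node `i`. -/
def shiftFactor (i : D.I0) : ℂ[X] := shiftPoly a (D.N i) (nshift D μ' i)

/-- The factor by which the current `x_i^±` is multiplied. -/
def xFactor : Bool → D.I0 → ℂ[X]
  | true, _ => 1
  | false, i => shiftFactor D μ' a i

lemma exists_expand_eq_shiftFactor (i : D.I0) :
    ∃ p, Polynomial.expand ℂ (D.N i) p = shiftFactor D μ' a i :=
  ⟨_, (shiftPoly_eq_expand a _ _).symm⟩

lemma exists_expand_eq_xFactor (ε : Bool) (i : D.I0) :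
    ∃ p, Polynomial.expand ℂ (D.N i) p = xFactor D μ' a ε i := by
  cases ε
  exacts [exists_expand_eq_shiftFactor D μ' a i, ⟨1, map_one _⟩]

/-- The scalar subtracted from `h_{i,m}`. It is the coefficient of `z^m` in the logarithm
of `(1 - (az)^{ι_i})^{-n_i(μ')}` (expanded at `0` for `m > 0` and, up to the monomial factor, at
`∞` for `m < 0`) divided by `±(q_i - q_i⁻¹)`; for `m = 0` the division by zero gives `0`. -/
def hShift (i : D.I0) (m : ℤ) : ℂ :=
  if (D.N i : ℤ) ∣ m then (nshift D μ' i * D.N i * a ^ m) / (D.qd i * m) else 0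

lemma qd_mul_hShift (i : D.I0) {m : ℤ} (hm : m ≠ 0) :
    D.qd i * m * hShift D μ' a i m =
      if (D.N i : ℤ) ∣ m then nshift D μ' i * D.N i * a ^ m else 0 := by
  have hqm : D.qd i * m ≠ 0 := mul_ne_zero (qd_ne_zero D i) (Int.cast_ne_zero.2 hm)
  rw [hShift]
  split_ifs
  · exact mul_div_cancel₀ _ hqm
  · exact mul_zero _

/-- The images of the Drinfeld generators under the shift homomorphism. The leading coefficient of
`φ_i^-` acquires the leading coefficient `(-a^{ι_i})^{n_i(μ')}` of the factor at `∞`. -/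
def genImage : TQAGen D → U D μp (μm + μ')
  | .xp i r => xp D μp (μm + μ') i r
  | .xm i r => currentMul (shiftFactor D μ' a i) (xm D μp (μm + μ') i) r
  | .pp i r => currentMul (shiftFactor D μ' a i) (pp D μp (μm + μ') i) r
  | .pm i r => currentMul (shiftFactor D μ' a i) (pm D μp (μm + μ') i) r
  | .ppInv i => ppInv D μp (μm + μ') i
  | .pmInv i => ((-(a ^ D.N i)) ^ nshift D μ' i)⁻¹ • pmInv D μp (μm + μ') i
  | .hh i m => hgen D μp (μm + μ') i m - algebraMap ℂ _ (hShift D μ' a i m)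

/-- The shift homomorphism on the free algebra of the Drinfeld generators. -/
def preShift : FA D →ₐ[ℂ] U D μp (μm + μ') := FreeAlgebra.lift ℂ (genImage D μp μm μ' a)

lemma preShift_ι (g : TQAGen D) :
    preShift D μp μm μ' a (FreeAlgebra.ι ℂ g) = genImage D μp μm μ' a g :=
  FreeAlgebra.lift_ι_apply _ _

lemma preShift_gX (ε : Bool) (i : D.I0) (r : ℤ) :
    preShift D μp μm μ' a (gX D ε i r) =
      currentMul (xFactor D μ' a ε i) (fun r => mkU D μp (μm + μ') (gX D ε i r)) r := by
  cases ε
  · exact preShift_ι D μp μm μ' a (.xm i r)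
  · exact (preShift_ι D μp μm μ' a (.xp i r)).trans (by rw [xFactor, currentMul_one]; rfl)

lemma preShift_gXp (i : D.I0) (r : ℤ) :
    preShift D μp μm μ' a (gXp D i r) = xp D μp (μm + μ') i r :=
  preShift_ι D μp μm μ' a (.xp i r)

lemma preShift_gXm (i : D.I0) (r : ℤ) :
    preShift D μp μm μ' a (gXm D i r) =
      currentMul (shiftFactor D μ' a i) (xm D μp (μm + μ') i) r :=
  preShift_ι D μp μm μ' a (.xm i r)

lemma preShift_gPp (i : D.I0) (r : ℤ) :
    preShift D μp μm μ' a (gPp D i r) =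
      currentMul (shiftFactor D μ' a i) (pp D μp (μm + μ') i) r :=
  preShift_ι D μp μm μ' a (.pp i r)

lemma preShift_gPm (i : D.I0) (r : ℤ) :
    preShift D μp μm μ' a (gPm D i r) =
      currentMul (shiftFactor D μ' a i) (pm D μp (μm + μ') i) r :=
  preShift_ι D μp μm μ' a (.pm i r)

lemma preShift_gPpInv (i : D.I0) :
    preShift D μp μm μ' a (gPpInv D i) = ppInv D μp (μm + μ') i :=
  preShift_ι D μp μm μ' a (.ppInv i)

lemma preShift_gPmInv (i : D.I0) :
    preShift D μp μm μ' a (gPmInv D i) =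
      ((-(a ^ D.N i)) ^ nshift D μ' i)⁻¹ • pmInv D μp (μm + μ') i :=
  preShift_ι D μp μm μ' a (.pmInv i)

lemma preShift_gH (i : D.I0) (m : ℤ) :
    preShift D μp μm μ' a (gH D i m) =
      hgen D μp (μm + μ') i m - algebraMap ℂ _ (hShift D μ' a i m) :=
  preShift_ι D μp μm μ' a (.hh i m)

lemma smul_preShift_gH (i : D.I0) {m : ℤ} (hm : m ≠ 0) :
    (D.qd i * m) • preShift D μp μm μ' a (gH D i m) =
      (D.qd i * m) • hgen D μp (μm + μ') i m -
        algebraMap ℂ _ (if (D.N i : ℤ) ∣ m then nshift D μ' i * D.N i * a ^ m else 0) := by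
  rw [preShift_gH, smul_sub, Algebra.smul_def _ (algebraMap ℂ _ _), ← map_mul,
    qd_mul_hShift D μ' a i hm]

end Generators

section CartanCurrents

variable (μp μm μ' : D.I0 → ℤ) (a : ℂ)

lemma pp_eq_zero (i : D.I0) {r : ℤ} (hr : r < 0) : pp D μp μm i (-μp i + r) = 0 :=
  (mkU_rel (Rel.pp_supp i _ (by omega))).trans (map_zero _)

lemma pm_eq_zero (i : D.I0) {r : ℤ} (hr : r < 0) : pm D μp μm i (μm i - r) = 0 :=
  (mkU_rel (Rel.pm_supp i _ (by omega))).trans (map_zero _)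

lemma preShift_gPp_add (i : D.I0) (r : ℤ) :
    preShift D μp μm μ' a (gPp D i (-μp i + r)) =
      currentMul (shiftFactor D μ' a i) (fun r => pp D μp (μm + μ') i (-μp i + r)) r := by
  rw [preShift_gPp, currentMul_comp_add_left]

lemma preShift_gPp_lead (i : D.I0) :
    preShift D μp μm μ' a (gPp D i (-μp i)) = pp D μp (μm + μ') i (-μp i) := by
  have h := preShift_gPp_add D μp μm μ' a i 0
  rwa [currentMul_zero_of_forall_neg _ fun r hr => pp_eq_zero D μp (μm + μ') i hr, shiftFactor,
    coeff_zero_shiftPoly a (N_pos D i), one_smul, add_zero] at h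

lemma preShift_pp_supp (i : D.I0) {r : ℤ} (hr : r < -μp i) :
    preShift D μp μm μ' a (gPp D i r) = 0 := by
  have h := preShift_gPp_add D μp μm μ' a i (μp i + r)
  rwa [currentMul_eq_zero_of_neg _ (fun r hr => pp_eq_zero D μp (μm + μ') i hr) (by omega),
    neg_add_cancel_left] at h

variable {a μ'} (ha : a ≠ 0) (hΛμ' : ∀ i, D.fixed i → (D.M : ℤ) ∣ μ' i) (hμ' : ∀ i, μ' i ≤ 0)
include ha hΛμ' hμ'

/-- Expanding the factor at `∞` moves the leading mode of `φ_i^-` from `α_i(μ + μ')` to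
`α_i(μ)`. -/
lemma preShift_gPm_sub (i : D.I0) (r : ℤ) :
    preShift D μp μm μ' a (gPm D i (μm i - r)) =
      (-(a ^ D.N i)) ^ nshift D μ' i • currentMul (shiftFactor D μ' a⁻¹ i)
        (fun r => pm D μp (μm + μ') i ((μm + μ') i - r)) r := by
  have hmode : μm i - r = (μm + μ') i + (D.N i * nshift D μ' i : ℕ) - r := by
    rw [N_mul_nshift D hΛμ' hμ' i, Pi.add_apply, add_neg_cancel_right]
  rw [preShift_gPm, hmode, shiftFactor, currentMul_reflect (natDegree_shiftPoly_le _ _ _),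
    reflect_shiftPoly ha, ← Polynomial.smul_eq_C_mul, currentMul, map_smul]
  rfl

lemma preShift_gPm_lead (i : D.I0) :
    preShift D μp μm μ' a (gPm D i (μm i)) =
      (-(a ^ D.N i)) ^ nshift D μ' i • pm D μp (μm + μ') i ((μm + μ') i) := by
  have h := preShift_gPm_sub D μp μm ha hΛμ' hμ' i 0
  rwa [currentMul_zero_of_forall_neg _ fun r hr => pm_eq_zero D μp (μm + μ') i hr, shiftFactor,
    coeff_zero_shiftPoly _ (N_pos D i), one_smul, sub_zero, sub_zero] at h

lemma preShift_pm_supp (i : D.I0) {r : ℤ} (hr : μm i < r) :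
    preShift D μp μm μ' a (gPm D i r) = 0 := by
  have h := preShift_gPm_sub D μp μm ha hΛμ' hμ' i (μm i - r)
  rwa [currentMul_eq_zero_of_neg _ (fun r hr => pm_eq_zero D μp (μm + μ') i hr) (by omega),
    smul_zero, sub_sub_cancel] at h

end CartanCurrents

section Relations

variable (μp μm μ' : D.I0 → ℤ) (a : ℂ)

lemma map_pp_exp_iff {B : Type*} [Ring B] [Algebra ℂ B] (f : FA D →ₐ[ℂ] B) (i : D.I0) :
    (∀ m : ℕ, f (((m : ℂ) + 1) • gPp D i (-μp i + (m + 1))) =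
      f (D.qd i • ∑ k ∈ Finset.range (m + 1), ((k : ℂ) + 1) •
        (gH D i ((k : ℤ) + 1) * gPp D i (-μp i + (m + 1) - ((k : ℤ) + 1))))) ↔
      ExpRecursion (D.qd i) (fun m => f (gH D i m)) (fun r => f (gPp D i (-μp i + r))) := by
  simp only [ExpRecursion, map_smul, map_sum, map_mul, add_sub_assoc]

lemma map_pm_exp_iff {B : Type*} [Ring B] [Algebra ℂ B] (f : FA D →ₐ[ℂ] B) (i : D.I0) :
    (∀ m : ℕ, f ((-((m : ℂ) + 1)) • gPm D i (μm i - (m + 1))) =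
      f (D.qd i • ∑ k ∈ Finset.range (m + 1), ((k : ℂ) + 1) •
        (gH D i (-((k : ℤ) + 1)) * gPm D i (μm i - (m + 1) + ((k : ℤ) + 1))))) ↔
      ExpRecursion (-D.qd i) (fun m => f (gH D i (-m))) (fun r => f (gPm D i (μm i - r))) := by
  simp only [ExpRecursion, map_smul, map_sum, map_mul, neg_smul, map_neg,
    sub_sub_eq_add_sub, sub_add_eq_add_sub, neg_eq_iff_eq_neg]

lemma preShift_pp_exp (i : D.I0) :
    ExpRecursion (D.qd i) (fun m => preShift D μp μm μ' a (gH D i m))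
      (fun r => preShift D μp μm μ' a (gPp D i (-μp i + r))) := by
  rw [funext (preShift_gPp_add D μp μm μ' a i)]
  refine ExpRecursion.currentMul_shiftPoly (N_pos D i) (fun r hr => pp_eq_zero D _ _ i hr)
    (fun m hm => ?_)
    ((map_pp_exp_iff D μp (mkU D μp (μm + μ')) i).1 fun m => mkU_rel (Rel.pp_exp i m))
  simpa only [hgen, Int.cast_natCast, Int.natCast_dvd_natCast, zpow_natCast] using
    smul_preShift_gH D μp μm μ' a i (Int.natCast_ne_zero.2 hm)

variable {μ' a} in
lemma preShift_pm_exp (ha : a ≠ 0) (hΛμ' : ∀ i, D.fixed i → (D.M : ℤ) ∣ μ' i)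
    (hμ' : ∀ i, μ' i ≤ 0) (i : D.I0) :
    ExpRecursion (-D.qd i) (fun m => preShift D μp μm μ' a (gH D i (-m)))
      (fun r => preShift D μp μm μ' a (gPm D i (μm i - r))) := by
  rw [funext (preShift_gPm_sub D μp μm ha hΛμ' hμ' i)]
  refine ExpRecursion.smul _ <| ExpRecursion.currentMul_shiftPoly (N_pos D i)
    (fun r hr => pm_eq_zero D _ _ i hr) (fun m hm => ?_)
    ((map_pm_exp_iff D (μm + μ') (mkU D μp (μm + μ')) i).1 fun m => mkU_rel (Rel.pm_exp i m))
  simpa only [hgen, Int.cast_neg, Int.cast_natCast, dvd_neg, Int.natCast_dvd_natCast, zpow_neg,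
    zpow_natCast, inv_pow, mul_neg, neg_mul] using
    smul_preShift_gH D μp μm μ' a i (neg_ne_zero.2 (Int.natCast_ne_zero.2 hm))

/-- The subalgebra generated by the Cartan generators. -/
def cartanSubalgebra : Subalgebra ℂ (U D μp μm) :=
  Algebra.adjoin ℂ ((fun g => mkU D μp μm (FreeAlgebra.ι ℂ g)) '' {g | IsCartanGen D g})

lemma commute_of_mem_cartanSubalgebra {x y : U D μp μm} (hx : x ∈ cartanSubalgebra D μp μm)
    (hy : y ∈ cartanSubalgebra D μp μm) : Commute x y := by
  refine Algebra.commute_of_mem_adjoin_of_forall_mem_commute hy ?_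
  rintro _ ⟨g, hg, rfl⟩
  refine (Algebra.commute_of_mem_adjoin_of_forall_mem_commute hx ?_).symm
  rintro _ ⟨g', hg', rfl⟩
  simpa only [commute_iff_eq, map_mul] using
    mkU_rel (Rel.cartan_comm (μp := μp) (μm := μm) g g' hg hg')

lemma genImage_mem_cartanSubalgebra {g : TQAGen D} (hg : IsCartanGen D g) :
    genImage D μp μm μ' a g ∈ cartanSubalgebra D μp (μm + μ') := by
  have mem (g : TQAGen D) (hg : IsCartanGen D g) :
      mkU D μp (μm + μ') (FreeAlgebra.ι ℂ g) ∈ cartanSubalgebra D μp (μm + μ') :=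
    Algebra.subset_adjoin ⟨g, hg, rfl⟩
  have currentMul_mem (p : ℂ[X]) (F : ℤ → U D μp (μm + μ'))
      (hF : ∀ r, F r ∈ cartanSubalgebra D μp (μm + μ')) (r : ℤ) :
      currentMul p F r ∈ cartanSubalgebra D μp (μm + μ') := by
    rw [currentMul_apply]
    exact sum_mem fun k _ => Subalgebra.smul_mem _ (hF _) _
  cases g with
  | xp i r => exact hg.elim
  | xm i r => exact hg.elim
  | pp i r => exact currentMul_mem _ _ (fun r => mem (.pp i r) trivial) r
  | pm i r => exact currentMul_mem _ _ (fun r => mem (.pm i r) trivial) r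
  | ppInv i => exact mem (.ppInv i) trivial
  | pmInv i => exact Subalgebra.smul_mem _ (mem (.pmInv i) trivial) _
  | hh i m => exact sub_mem (mem (.hh i m) trivial) (Subalgebra.algebraMap_mem _ _)

lemma preShift_cartan_comm {g g' : TQAGen D} (hg : IsCartanGen D g) (hg' : IsCartanGen D g') :
    Commute (preShift D μp μm μ' a (FreeAlgebra.ι ℂ g))
      (preShift D μp μm μ' a (FreeAlgebra.ι ℂ g')) := by
  rw [preShift_ι, preShift_ι]
  exact commute_of_mem_cartanSubalgebra D _ _ (genImage_mem_cartanSubalgebra D μp μm μ' a hg)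
    (genImage_mem_cartanSubalgebra D μp μm μ' a hg')

lemma preShift_h_supp (i : D.I0) (m : ℤ) (hm : ¬ (D.N i : ℤ) ∣ m ∨ m = 0) :
    preShift D μp μm μ' a (gH D i m) = 0 := by
  have hscalar : hShift D μ' a i m = 0 := by
    rcases hm with hm | rfl
    · exact if_neg hm
    · simp [hShift]
  rw [preShift_gH, hscalar, map_zero, sub_zero]
  exact (mkU_rel (Rel.h_supp i m hm)).trans (map_zero _)

lemma preShift_x_supp (ε : Bool) (i : D.I0) {r : ℤ} (hr : ¬ (D.N i : ℤ) ∣ r) :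
    preShift D μp μm μ' a (gX D ε i r) = 0 := by
  obtain ⟨p, hp⟩ := exists_expand_eq_xFactor D μ' a ε i
  rw [preShift_gX, ← hp]
  refine (currentMul_expand_congr _ p (G := 0) fun k => ?_).trans (by rw [map_zero, Pi.zero_apply])
  refine (mkU_rel (Rel.x_supp ε i _ ?_)).trans (map_zero _)
  rwa [Nat.cast_mul, dvd_sub_left (dvd_mul_right _ _)]

lemma preShift_gX_of_forall {L L' : U D μp (μm + μ') →ₗ[ℂ] U D μp (μm + μ')} {ε : Bool}
    {j : D.I0} {m : ℤ}
    (h : ∀ r, L (mkU D μp (μm + μ') (gX D ε j r)) = L' (mkU D μp (μm + μ') (gX D ε j (m + r))))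
    (r : ℤ) : L (preShift D μp μm μ' a (gX D ε j r)) =
      L' (preShift D μp μm μ' a (gX D ε j (m + r))) := by
  rw [preShift_gX, preShift_gX]
  exact map_currentMul_eq_of_forall (xFactor D μ' a ε j) h r

lemma preShift_lead_conj_p (ε : Bool) (i j : D.I0) (r : ℤ) :
    preShift D μp μm μ' a (gPp D i (-μp i) * gX D ε j r) =
      preShift D μp μm μ' a
        ((D.q ^ (sg ε * ∑ s ∈ Finset.range D.M, D.Cs i j s)) •
          (gX D ε j r * gPp D i (-μp i))) := by
  have h := preShift_gX_of_forall D μp μm μ' a (ε := ε) (j := j) (m := 0)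
    (L := LinearMap.mulLeft ℂ (pp D μp (μm + μ') i (-μp i)))
    (L' := (D.q ^ (sg ε * ∑ s ∈ Finset.range D.M, D.Cs i j s)) •
      LinearMap.mulRight ℂ (pp D μp (μm + μ') i (-μp i)))
    (fun r => by simpa [pp] using mkU_rel (Rel.lead_conj_p (μm := μm + μ') ε i j r)) r
  simpa [preShift_gPp_lead] using h

variable {μ' a} in
lemma preShift_lead_conj_m (ha : a ≠ 0) (hΛμ' : ∀ i, D.fixed i → (D.M : ℤ) ∣ μ' i)
    (hμ' : ∀ i, μ' i ≤ 0) (ε : Bool) (i j : D.I0) (r : ℤ) :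
    preShift D μp μm μ' a (gPm D i (μm i) * gX D ε j r) =
      preShift D μp μm μ' a
        ((D.q ^ (-(sg ε) * ∑ s ∈ Finset.range D.M, D.Cs i j s)) •
          (gX D ε j r * gPm D i (μm i))) := by
  have h := preShift_gX_of_forall D μp μm μ' a (ε := ε) (j := j) (m := 0)
    (L := LinearMap.mulLeft ℂ (pm D μp (μm + μ') i ((μm + μ') i)))
    (L' := (D.q ^ (-(sg ε) * ∑ s ∈ Finset.range D.M, D.Cs i j s)) •
      LinearMap.mulRight ℂ (pm D μp (μm + μ') i ((μm + μ') i)))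
    (fun r => by simpa [pm] using mkU_rel (Rel.lead_conj_m (μp := μp) (μm := μm + μ') ε i j r)) r
  simp only [LinearMap.mulLeft_apply, LinearMap.smul_apply, LinearMap.mulRight_apply,
    zero_add] at h
  rw [map_mul, map_smul, map_mul, preShift_gPm_lead D μp μm ha hΛμ' hμ', smul_mul_assoc,
    mul_smul_comm, h, smul_comm]

lemma preShift_h_x (ε : Bool) (i j : D.I0) {m : ℤ} (hm : m ≠ 0) (r : ℤ) :
    preShift D μp μm μ' a (gH D i m * gX D ε j r - gX D ε j r * gH D i m) =
      preShift D μp μm μ' a (((sg ε : ℂ) * D.hxCoef i j m) • gX D ε j (m + r)) := by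
  have h := preShift_gX_of_forall D μp μm μ' a (ε := ε) (j := j) (m := m)
    (L := LinearMap.mulLeft ℂ (hgen D μp (μm + μ') i m) -
      LinearMap.mulRight ℂ (hgen D μp (μm + μ') i m))
    (L' := ((sg ε : ℂ) * D.hxCoef i j m) • LinearMap.id)
    (fun r => by simpa [hgen] using mkU_rel (Rel.h_x (μp := μp) (μm := μm + μ') ε i j m r hm)) r
  simp only [LinearMap.sub_apply, LinearMap.mulLeft_apply, LinearMap.mulRight_apply,
    LinearMap.smul_apply, LinearMap.id_apply] at h
  rw [map_sub, map_mul, map_mul, map_smul, preShift_gH, sub_mul, mul_sub,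
    (Algebra.commutes (hShift D μ' a i m) (preShift D μp μm μ' a (gX D ε j r))),
    sub_sub_sub_cancel_right, h]

lemma xp_mul_xm_sub (i j : D.I0) (r r' : ℤ) :
    xp D μp μm i r * xm D μp μm j r' - xm D μp μm j r' * xp D μp μm i r =
      if i = j ∧ (D.N i : ℤ) ∣ r' then
        (D.qd i)⁻¹ • (pp D μp μm i (r + r') - pm D μp μm i (r + r')) else 0 := by
  simpa only [map_sub, map_mul, map_smul, map_zero, apply_ite (mkU D μp μm), xp, xm,
    pp, pm] using
    mkU_rel (Rel.xp_xm (μp := μp) (μm := μm) i j r r')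

lemma preShift_xp_xm (i j : D.I0) (r r' : ℤ) :
    preShift D μp μm μ' a (gXp D i r * gXm D j r' - gXm D j r' * gXp D i r) =
      preShift D μp μm μ' a (if i = j ∧ (D.N i : ℤ) ∣ r' then
        (D.qd i)⁻¹ • (gPp D i (r + r') - gPm D i (r + r')) else 0) := by
  have h := map_currentMul (LinearMap.mulLeft ℂ (xp D μp (μm + μ') i r) -
    LinearMap.mulRight ℂ (xp D μp (μm + μ') i r)) (shiftFactor D μ' a j)
    (xm D μp (μm + μ') j) r'
  simp only [LinearMap.sub_apply, LinearMap.mulLeft_apply, LinearMap.mulRight_apply,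
    xp_mul_xm_sub] at h
  rw [map_sub, map_mul, map_mul, preShift_gXp, preShift_gXm, h]
  by_cases hij : i = j
  · subst hij
    obtain ⟨p, hp⟩ := exists_expand_eq_shiftFactor D μ' a i
    simp only [true_and, ← hp, currentMul_expand_ite_dvd]
    split_ifs
    · rw [map_smul, map_sub, preShift_gPp, preShift_gPm, ← hp, ← currentMul_comp_add_left,
        ← currentMul_comp_add_left, ← Pi.sub_apply, ← map_sub, ← Pi.smul_apply, ← map_smul]
      rfl
    · rw [map_zero]
  · simp only [hij, false_and, if_false, map_zero]
    exact congrFun (map_zero (currentMul _)) r'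

end Relations

section SymmetrizedRelations

/-- The image under `f` of a relation `∑_{π ∈ Γ} ∑_{t ∈ T} Φ_t(x(z_{π 0}), x(z_{π 1}), …) = 0`
between the currents `x_{c s}^ε`, in modes; the `t`-th summand is multiplied by the monomial with
exponents `w t`. -/
def symmRelation {B τ : Type*} [Ring B] [Algebra ℂ B] (f : FA D →ₐ[ℂ] B) {n : ℕ}
    (Γ : Finset (Equiv.Perm (Fin n))) (T : Finset τ)
    (Φ : τ → MultilinearMap ℂ (fun _ : Fin n => B) B) (w : τ → Fin n → ℤ) (ε : Bool)
    (c : Fin n → D.I0) (m : Fin n → ℤ) : B :=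
  ∑ π ∈ Γ, ∑ t ∈ T, Φ t fun s => f (gX D ε (c s) (m (π s) + w t s))

section Forms

variable {B : Type*} [Ring B] [Algebra ℂ B] (f : FA D →ₐ[ℂ] B)

/-- The coefficients of the quadratic relations as forms in the two currents. -/
def quadForm (ε : Bool) (i j : D.I0) (K : Finset (Fin D.M)) :
    MultilinearMap ℂ (fun _ : Fin 2 => B) B :=
  ((-1 : ℂ) ^ K.card * ∏ s ∈ K, (D.ζ ^ ((s : ℕ) + 1) * D.q ^ (sg ε * D.Cs i j (s : ℕ)))) •
      word ℂ 1
    - ((-1 : ℂ) ^ K.card * (∏ s ∈ K, D.ζ ^ ((s : ℕ) + 1)) *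
        ∏ s ∈ Kᶜ, D.q ^ (sg ε * D.Cs i j (s : ℕ))) • word ℂ (Equiv.swap 0 1)

/-- The form `v₀ v₁ v₂ - (q^{2Md_{ij}} + q^{-2Md_{ij}}) v₁ v₀ v₂ + v₁ v₂ v₀` of the Serre relations
between `x_j` and `x_i`, weighted by the coefficients of `P^±_{i,j}`. -/
def serreForm (ε : Bool) (i j : D.I0) (t : ℕ) : MultilinearMap ℂ (fun _ : Fin 3 => B) B :=
  D.pcoef (sg ε) i j t •
    (word ℂ 1 - D.serreC i j • word ℂ (Equiv.swap 0 1) + word ℂ (finRotate 3))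

lemma map_xx_iff (ε : Bool) (i j : D.I0) (m : Fin 2 → ℤ) :
    f (∑ K : Finset (Fin D.M),
        ((-1 : ℂ) ^ K.card *
            ∏ s ∈ K, (D.ζ ^ ((s : ℕ) + 1) * D.q ^ (sg ε * D.Cs i j (s : ℕ)))) •
          (gX D ε i (m 0 + (D.M : ℤ) - (K.card : ℤ)) * gX D ε j (m 1 + (K.card : ℤ)))) =
      f (∑ K : Finset (Fin D.M),
        ((-1 : ℂ) ^ K.card * (∏ s ∈ K, D.ζ ^ ((s : ℕ) + 1)) *
            ∏ s ∈ Kᶜ, D.q ^ (sg ε * D.Cs i j (s : ℕ))) •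
          (gX D ε j (m 1 + (K.card : ℤ)) * gX D ε i (m 0 + (D.M : ℤ) - (K.card : ℤ)))) ↔
    symmRelation D f {1} Finset.univ (quadForm D ε i j) (fun K => ![D.M - K.card, K.card]) ε
      ![i, j] m = 0 := by
  rw [← sub_eq_zero, map_sum, map_sum, ← Finset.sum_sub_distrib, symmRelation,
    Finset.sum_singleton]
  refine Eq.congr_left (Finset.sum_congr rfl fun K _ => ?_)
  simp [quadForm, word_two, add_sub_assoc]

lemma map_serre1 (ε : Bool) (i j : D.I0) (m : Fin 3 → ℤ) :
    f (∑ t ∈ Finset.range D.M, D.pcoef (sg ε) i j t •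
        (serreS D ε i j (m 0) (m 1 + (D.pa i j t : ℤ)) (m 2 + (D.pb i j t : ℤ)) +
          serreS D ε i j (m 0) (m 2 + (D.pa i j t : ℤ)) (m 1 + (D.pb i j t : ℤ)))) =
    symmRelation D f {1, Equiv.swap 1 2} (Finset.range D.M) (serreForm D ε i j)
      (fun t => ![0, D.pa i j t, D.pb i j t]) ε ![j, i, i] m := by
  have h01 : Equiv.swap (0 : Fin 3) 1 2 = 2 := by decide
  have h12 : Equiv.swap (1 : Fin 3) 2 0 = 0 := by decide
  rw [map_sum, symmRelation, Finset.sum_pair (by decide), ← Finset.sum_add_distrib]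
  refine Finset.sum_congr rfl fun t _ => ?_
  simp [serreForm, serreS, word_three, h01, h12]

lemma map_serre_triple (ε : Bool) (i : D.I0) (α β γ : ℂ) (d : ℤ) (m : Fin 3 → ℤ) :
    f (∑ π : Equiv.Perm (Fin 3),
        (α • (gX D ε i (m (π 0) + d) * gX D ε i (m (π 1)) * gX D ε i (m (π 2)))
          - β • (gX D ε i (m (π 0)) * gX D ε i (m (π 1) + d) * gX D ε i (m (π 2)))
          + γ • (gX D ε i (m (π 0)) * gX D ε i (m (π 1)) * gX D ε i (m (π 2) + d)))) =
    symmRelation D f Finset.univ Finset.univ (fun t => ![α, -β, γ] t • word ℂ 1)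
      (fun t => Pi.single t d) ε (fun _ => i) m := by
  rw [map_sum, symmRelation]
  refine Finset.sum_congr rfl fun π _ => ?_
  simp [Fin.sum_univ_three, word_three, sub_eq_add_neg]

end Forms

variable (μp μm μ' : D.I0 → ℤ) (a : ℂ)

lemma symmRelation_preShift {τ : Type*} {n : ℕ} {Γ : Finset (Equiv.Perm (Fin n))} {T : Finset τ}
    {Φ : τ → MultilinearMap ℂ (fun _ : Fin n => U D μp (μm + μ')) (U D μp (μm + μ'))}
    {w : τ → Fin n → ℤ} {ε : Bool} {c : Fin n → D.I0} (hc : ∀ π ∈ Γ, ∀ s, c (π s) = c s)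
    (h : ∀ m, symmRelation D (mkU D μp (μm + μ')) Γ T Φ w ε c m = 0) (m : Fin n → ℤ) :
    symmRelation D (preShift D μp μm μ' a) Γ T Φ w ε c m = 0 := by
  simp only [symmRelation, preShift_gX]
  exact sum_perm_currentMul_eq_zero Γ T Φ w (p := fun s => xFactor D μ' a ε (c s))
    (F := fun s r => mkU D μp (μm + μ') (gX D ε (c s) r)) (fun π hπ s => by rw [hc π hπ s]) h m

lemma preShift_xx (ε : Bool) (i j : D.I0) (m : Fin 2 → ℤ) :
    symmRelation D (preShift D μp μm μ' a) {1} Finset.univ (quadForm D ε i j)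
      (fun K => ![D.M - K.card, K.card]) ε ![i, j] m = 0 :=
  symmRelation_preShift D μp μm μ' a (by simp)
    (fun m => (map_xx_iff D _ ε i j m).1 (mkU_rel (Rel.xx ε i j (m 0) (m 1)))) m

lemma preShift_serre1 (ε : Bool) {i j : D.I0} (hij : D.Cij i j = -1) (hne : i ≠ j)
    (m : Fin 3 → ℤ) :
    symmRelation D (preShift D μp μm μ' a) {1, Equiv.swap 1 2} (Finset.range D.M)
      (serreForm D ε i j) (fun t => ![0, D.pa i j t, D.pb i j t]) ε ![j, i, i] m = 0 := by
  refine symmRelation_preShift D μp μm μ' a ?_ (fun m => ?_) m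
  · simp only [Finset.forall_mem_insert, Finset.mem_singleton, forall_eq, Equiv.Perm.one_apply,
      implies_true, true_and]
    intro s
    fin_cases s <;> rfl
  · rw [← map_serre1, mkU_rel (Rel.serre1 ε i j hij hne (m 0) (m 1) (m 2)), map_zero]

lemma preShift_serre2 (ε : Bool) {i : D.I0} (hii : D.Ciσ i = -1) (m : Fin 3 → ℤ) :
    symmRelation D (preShift D μp μm μ' a) Finset.univ Finset.univ
      (fun t => ![D.sq ^ 3, -(D.sq + D.sq⁻¹), (D.sq ^ 3)⁻¹] t • word ℂ 1)
      (fun t => Pi.single t (-sg ε)) ε (fun _ => i) m = 0 :=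
  symmRelation_preShift D μp μm μ' a (fun _ _ _ => rfl) (fun m => by
    simpa only [map_zero, ← map_serre_triple, ← sub_eq_add_neg] using
      mkU_rel (Rel.serre2 (μp := μp) (μm := μm + μ') ε i hii m)) m

lemma preShift_serre3 (ε : Bool) {i : D.I0} (hii : D.Ciσ i = -1) (m : Fin 3 → ℤ) :
    symmRelation D (preShift D μp μm μ' a) Finset.univ Finset.univ
      (fun t => ![(D.sq ^ 3)⁻¹, -(D.sq + D.sq⁻¹), D.sq ^ 3] t • word ℂ 1)
      (fun t => Pi.single t (sg ε)) ε (fun _ => i) m = 0 :=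
  symmRelation_preShift D μp μm μ' a (fun _ _ _ => rfl) (fun m => by
    simpa only [map_zero, ← map_serre_triple] using
      mkU_rel (Rel.serre3 (μp := μp) (μm := μm + μ') ε i hii m)) m

end SymmetrizedRelations

section ShiftHomomorphism

variable (μp μm μ' : D.I0 → ℤ) (a : ℂ)

lemma ppInv_mul_pp (i : D.I0) : ppInv D μp μm i * pp D μp μm i (-μp i) = 1 := by
  simpa only [map_mul, map_one, pp, ppInv] using mkU_rel (Rel.pp_inv_l (μm := μm) i)

lemma pp_mul_ppInv (i : D.I0) : pp D μp μm i (-μp i) * ppInv D μp μm i = 1 := by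
  simpa only [map_mul, map_one, pp, ppInv] using mkU_rel (Rel.pp_inv_r (μm := μm) i)

lemma pmInv_mul_pm (i : D.I0) : pmInv D μp μm i * pm D μp μm i (μm i) = 1 := by
  simpa only [map_mul, map_one, pm, pmInv] using mkU_rel (Rel.pm_inv_l (μp := μp) i)

lemma pm_mul_pmInv (i : D.I0) : pm D μp μm i (μm i) * pmInv D μp μm i = 1 := by
  simpa only [map_mul, map_one, pm, pmInv] using mkU_rel (Rel.pm_inv_r (μp := μp) i)

variable {μ' a}

lemma preShift_rel (ha : a ≠ 0) (hΛμ' : ∀ i, D.fixed i → (D.M : ℤ) ∣ μ' i)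
    (hμ' : ∀ i, μ' i ≤ 0) {x y : FA D} (h : Rel D μp μm x y) :
    preShift D μp μm μ' a x = preShift D μp μm μ' a y := by
  have hlead (i : D.I0) : (-(a ^ D.N i)) ^ nshift D μ' i ≠ 0 :=
    pow_ne_zero _ (neg_ne_zero.2 (pow_ne_zero _ ha))
  cases h with
  | x_supp ε i r hr => rw [map_zero, preShift_x_supp D μp μm μ' a ε i hr]
  | h_supp i m hm => rw [map_zero, preShift_h_supp D μp μm μ' a i m hm]
  | pp_supp i r hr => rw [map_zero, preShift_pp_supp D μp μm μ' a i hr]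
  | pm_supp i r hr => rw [map_zero, preShift_pm_supp D μp μm ha hΛμ' hμ' i hr]
  | cartan_comm g g' hg hg' =>
    rw [map_mul, map_mul, (preShift_cartan_comm D μp μm μ' a hg hg').eq]
  | pp_inv_l i => rw [map_mul, preShift_gPpInv, preShift_gPp_lead, ppInv_mul_pp, map_one]
  | pp_inv_r i => rw [map_mul, preShift_gPpInv, preShift_gPp_lead, pp_mul_ppInv, map_one]
  | pm_inv_l i =>
    rw [map_mul, preShift_gPmInv, preShift_gPm_lead D μp μm ha hΛμ' hμ', smul_mul_smul_comm,
      inv_mul_cancel₀ (hlead i), one_smul, pmInv_mul_pm, map_one]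
  | pm_inv_r i =>
    rw [map_mul, preShift_gPmInv, preShift_gPm_lead D μp μm ha hΛμ' hμ', smul_mul_smul_comm,
      mul_inv_cancel₀ (hlead i), one_smul, pm_mul_pmInv, map_one]
  | pp_exp i m => exact (map_pp_exp_iff D μp _ i).2 (preShift_pp_exp D μp μm μ' a i) m
  | pm_exp i m => exact (map_pm_exp_iff D μm _ i).2 (preShift_pm_exp D μp μm ha hΛμ' hμ' i) m
  | lead_conj_p ε i j r => exact preShift_lead_conj_p D μp μm μ' a ε i j r
  | lead_conj_m ε i j r => exact preShift_lead_conj_m D μp μm ha hΛμ' hμ' ε i j r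
  | h_x ε i j m r hm => exact preShift_h_x D μp μm μ' a ε i j hm r
  | xp_xm i j r r' => exact preShift_xp_xm D μp μm μ' a i j r r'
  | xx ε i j r r' => exact (map_xx_iff D _ ε i j ![r, r']).2 (preShift_xx D μp μm μ' a ε i j _)
  | serre1 ε i j hij hne k m1 m2 =>
    exact ((map_serre1 D _ ε i j ![k, m1, m2]).trans
      (preShift_serre1 D μp μm μ' a ε hij hne _)).trans (map_zero _).symm
  | serre2 ε i hii m =>
    simp only [sub_eq_add_neg (m _), map_serre_triple, preShift_serre2 D μp μm μ' a ε hii, map_zero]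
  | serre3 ε i hii m => rw [map_serre_triple, preShift_serre3 D μp μm μ' a ε hii, map_zero]

/-- The algebra homomorphism `ι_{μ,μ',a}`. -/
def shiftHom (ha : a ≠ 0) (hΛμ' : ∀ i, D.fixed i → (D.M : ℤ) ∣ μ' i) (hμ' : ∀ i, μ' i ≤ 0) :
    U D μp μm →ₐ[ℂ] U D μp (μm + μ') :=
  RingQuot.liftAlgHom ℂ ⟨preShift D μp μm μ' a, fun _ _ => preShift_rel D μp μm ha hΛμ' hμ'⟩

lemma shiftHom_mkU (ha : a ≠ 0) (hΛμ' : ∀ i, D.fixed i → (D.M : ℤ) ∣ μ' i)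
    (hμ' : ∀ i, μ' i ≤ 0) (x : FA D) :
    shiftHom D μp μm ha hΛμ' hμ' (mkU D μp μm x) = preShift D μp μm μ' a x :=
  RingQuot.liftAlgHom_mkAlgHom_apply ℂ _ _ x

end ShiftHomomorphism

theorem shift_homomorphism_general (μp μm μ' : D.I0 → ℤ)
    (hΛμ' : ∀ i, D.fixed i → (D.M : ℤ) ∣ μ' i)
    (hμ' : ∀ i, μ' i ≤ 0) (a : ℂ) (ha : a ≠ 0) :
    ∃ f : U D μp μm →ₐ[ℂ] U D μp (μm + μ'),
      (∀ (i : D.I0) (m : ℤ), f (xp D μp μm i m) = xp D μp (μm + μ') i m) ∧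
      (∀ (i : D.I0) (m : ℤ), f (xm D μp μm i m) =
        ∑ k ∈ Finset.range (nshift D μ' i + 1),
          (((nshift D μ' i).choose k : ℂ) * (-1) ^ k * a ^ (iot D i * k)) •
            xm D μp (μm + μ') i (m - (iot D i * k : ℕ))) ∧
      (∀ (i : D.I0) (r : ℤ), f (pp D μp μm i r) =
        ∑ k ∈ Finset.range (nshift D μ' i + 1),
          (((nshift D μ' i).choose k : ℂ) * (-1) ^ k * a ^ (iot D i * k)) •
            pp D μp (μm + μ') i (r - (iot D i * k : ℕ))) ∧
      (∀ (i : D.I0) (r : ℤ), f (pm D μp μm i r) =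
        ∑ k ∈ Finset.range (nshift D μ' i + 1),
          (((nshift D μ' i).choose k : ℂ) * (-1) ^ k * a ^ (iot D i * k)) •
            pm D μp (μm + μ') i (r - (iot D i * k : ℕ))) :=
  have shiftFactor_apply (F : ℤ → U D μp (μm + μ')) (i : D.I0) :
      currentMul (shiftFactor D μ' a i) F = fun r => ∑ k ∈ Finset.range (nshift D μ' i + 1),
        (((nshift D μ' i).choose k : ℂ) * (-1) ^ k * a ^ (iot D i * k)) •
          F (r - (iot D i * k : ℕ)) := funext (currentMul_shiftPoly_apply a _ _ F)
  ⟨shiftHom D μp μm ha hΛμ' hμ',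
    fun i m => by rw [xp, shiftHom_mkU, preShift_gXp],
    fun i m => by rw [xm, shiftHom_mkU, preShift_gXm, shiftFactor_apply],
    fun i r => by rw [pp, shiftHom_mkU, preShift_gPp, shiftFactor_apply],
    fun i r => by rw [pm, shiftHom_mkU, preShift_gPm, shiftFactor_apply]⟩

/-- **Existence of the shift homomorphism.**  Let `ĝ^σ` be a twisted affine type other
than `A₂ₙ⁽²⁾`, `μ ∈ Λ`, `μ' ∈ -Λ⁺`, `a ∈ ℂ^*`.  The assignment
`x_i^+(z) ↦ x_i^+(z)`, `x_i^-(z) ↦ (1-(az⁻¹)^{ι_i})^{n_i(μ')} x_i^-(z)`,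
`φ_i^±(z) ↦ (1-(az)^{ι_i})^{n_i(μ')} φ_i^±(z)` on Drinfeld currents defines an algebra
homomorphism `ι_{μ,μ',a} : 𝒰_q^μ(ĝ^σ) → 𝒰_q^{μ+μ'}(ĝ^σ)` (written below in modes,
using `(1-w)^n = ∑_k (n choose k)(-1)^k w^k`). -/
theorem shift_homomorphism (hA : ∀ i, D.Ciσ i ≠ -1)
    (μ μ' : D.I0 → ℤ)
    (hΛμ : ∀ i, D.fixed i → (D.M : ℤ) ∣ μ i)
    (hΛμ' : ∀ i, D.fixed i → (D.M : ℤ) ∣ μ' i)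
    (hμ' : ∀ i, μ' i ≤ 0) (a : ℂ) (ha : a ≠ 0) :
    ∃ f : U D 0 μ →ₐ[ℂ] U D 0 (μ + μ'),
      (∀ (i : D.I0) (m : ℤ), f (xp D 0 μ i m) = xp D 0 (μ + μ') i m) ∧
      (∀ (i : D.I0) (m : ℤ), f (xm D 0 μ i m) =
        ∑ k ∈ Finset.range (nshift D μ' i + 1),
          (((nshift D μ' i).choose k : ℂ) * (-1) ^ k * a ^ (iot D i * k)) •
            xm D 0 (μ + μ') i (m - (iot D i * k : ℕ))) ∧
      (∀ (i : D.I0) (r : ℤ), f (pp D 0 μ i r) =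
        ∑ k ∈ Finset.range (nshift D μ' i + 1),
          (((nshift D μ' i).choose k : ℂ) * (-1) ^ k * a ^ (iot D i * k)) •
            pp D 0 (μ + μ') i (r - (iot D i * k : ℕ))) ∧
      (∀ (i : D.I0) (r : ℤ), f (pm D 0 μ i r) =
        ∑ k ∈ Finset.range (nshift D μ' i + 1),
          (((nshift D μ' i).choose k : ℂ) * (-1) ^ k * a ^ (iot D i * k)) •
            pm D 0 (μ + μ') i (r - (iot D i * k : ℕ))) :=
  shift_homomorphism_general D 0 μ μ' hΛμ' hμ' a ha

end TQA
end
end
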